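/- Let A be a σ-unital simple C*-algebra with QT̃(A) ≠ {0} which has strict comparison and surjective canonical map Γ, and let S ⊆ QT̃(A)\{0} be a compact subset such that ℝ₊·S = QT̃(A). If x ∈ A⊗K satisfies sup{d_τ(x*x) : τ ∈ S} < ∞, then x ∈ Ped(A⊗K). -/

import Mathlib

open scoped ENNReal
open Filter Topology

noncomputable section

namespace Paper

/-! ### Generic definitions in a (non-unital) C*-algebra -/

variable (R : Type*) [NonUnitalCStarAlgebra R] [PartialOrder R] [StarOrderedRing R]

variable {R} in
/-- The hereditary C*-subalgebra generated by `b`, i.e. `closure (b R b)`. -/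
def her (b : R) : Set R := closure {x : R | ∃ y : R, x = b * y * b}

/-- `I` is a (not necessarily closed) two-sided ideal of the subalgebra `B`. -/
def IsIdealIn (B I : Set R) : Prop :=
  I ⊆ B ∧ (0 : R) ∈ I ∧ (∀ x ∈ I, ∀ y ∈ I, x + y ∈ I) ∧ (∀ x ∈ I, -x ∈ I) ∧
    (∀ x ∈ I, ∀ b ∈ B, x * b ∈ I ∧ b * x ∈ I)

variable {R} in
/-- The Pedersen ideal of the subalgebra `B`: the minimal dense two-sided ideal of `B`,
equivalently the intersection of all dense two-sided ideals of `B`. -/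
def pedersenIn (B : Set R) : Set R :=
  ⋂ I ∈ {I : Set R | IsIdealIn R B I ∧ B ⊆ closure I}, I

/-- The Pedersen ideal of `R`. -/
def pedersen : Set R := pedersenIn (Set.univ : Set R)

variable {R} in
/-- Cuntz subequivalence `a ≲ b`. -/
def CuntzLE (a b : R) : Prop :=
  ∃ x : ℕ → R, Tendsto (fun n => ‖a - star (x n) * b * x n‖) atTop (𝓝 0)

variable {R} in
/-- Cuntz subequivalence relative to a subset `B` (the `xₙ` are taken in `B`). -/
def CuntzLEIn (B : Set R) (a b : R) : Prop :=
  ∃ x : ℕ → R, (∀ n, x n ∈ B) ∧ Tendsto (fun n => ‖a - star (x n) * b * x n‖) atTop (𝓝 0)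

variable {R} in
/-- Cuntz equivalence `a ∼ b`. -/
def CuntzEq (a b : R) : Prop := CuntzLE a b ∧ CuntzLE b a

/-- The cut-off function `f_ε`: `0` on `[0, ε/2]`, `1` on `[ε, ∞)`, linear in between. -/
def cutoff (ε : ℝ) : ℝ → ℝ := fun t => min 1 (max 0 (2 * t / ε - 1))

variable {R} in
/-- `f_ε(a)`, via the (non-unital) continuous functional calculus. -/
def fEps (ε : ℝ) (a : R) : R := cfcₙ (cutoff ε) a

/-- A densely defined 2-quasitrace on `R` (recorded by its values on positive elements;
the value on non-positive elements is normalised to `0`). -/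
structure QuasiTrace : Type _ where
  toFun : R → ℝ≥0∞
  zero_of_not_nonneg : ∀ a : R, ¬ (0 ≤ a) → toFun a = 0
  map_zero : toFun 0 = 0
  map_smul : ∀ (r : ℝ) (a : R), 0 < r → 0 ≤ a → toFun (r • a) = ENNReal.ofReal r * toFun a
  map_add_of_commute : ∀ a b : R, 0 ≤ a → 0 ≤ b → a * b = b * a →
    toFun (a + b) = toFun a + toFun b
  map_star_mul_self : ∀ x : R, toFun (star x * x) = toFun (x * star x)
  lowerSemicontinuousOn : LowerSemicontinuousOn toFun {a : R | 0 ≤ a}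
  finite_on_pedersen : ∀ a ∈ pedersen R, 0 ≤ a → toFun a < ∞
  exists_matrix_extension : ∃ σ : Matrix (Fin 2) (Fin 2) R → ℝ≥0∞,
    (∀ a : R, σ (fun i j => if i = 0 ∧ j = 0 then a else 0) = toFun a) ∧
    σ 0 = 0 ∧
    (∀ (r : ℝ) (x : Matrix (Fin 2) (Fin 2) R), 0 < r → (∃ y, x = star y * y) →
      σ (r • x) = ENNReal.ofReal r * σ x) ∧
    (∀ x y : Matrix (Fin 2) (Fin 2) R, (∃ z, x = star z * z) → (∃ z, y = star z * z) →
      x * y = y * x → σ (x + y) = σ x + σ y) ∧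
    (∀ x : Matrix (Fin 2) (Fin 2) R, σ (star x * x) = σ (x * star x))

/-- The topology of pointwise convergence on the Pedersen ideal. -/
instance : TopologicalSpace (QuasiTrace R) :=
  TopologicalSpace.induced (fun τ => fun a : pedersen R => τ.toFun a) inferInstance

variable {R}

/-- The zero quasitrace. -/
def QuasiTrace.IsZero (τ : QuasiTrace R) : Prop := ∀ a : R, τ.toFun a = 0

/-- The dimension function `d_τ(a) = lim_{ε → 0} τ(f_ε(a))`. -/
def dTau (τ : QuasiTrace R) (a : R) : ℝ≥0∞ :=
  ⨆ n : ℕ, τ.toFun (fEps (1 / (n + 1)) a)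

/-- `ω(a)` relative to a set `S` of quasitraces:
`lim_n sup {d_τ(a) - τ(f_{1/n}(a)) : τ ∈ S}`. -/
def omegaOn (S : Set (QuasiTrace R)) (a : R) : ℝ≥0∞ :=
  ⨅ n : ℕ, ⨆ τ ∈ S, (dTau τ a - τ.toFun (fEps (1 / (n + 1)) a))

/-- The seminorm `‖x‖_{2,S}`. -/
def norm2On (S : Set (QuasiTrace R)) (x : R) : ℝ≥0∞ :=
  ⨆ τ ∈ S, (τ.toFun (star x * x)) ^ (1 / 2 : ℝ)

variable (R)

/-- `R` has (Blackadar's) strict comparison. -/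
def StrictComparison : Prop :=
  ∀ a b : R, 0 ≤ a → 0 ≤ b →
    (∀ τ : QuasiTrace R, ¬ τ.IsZero → dTau τ a < dTau τ b) → CuntzLE a b

/-- `R` is a simple C*-algebra: it is nonzero and has no nontrivial closed two-sided ideals. -/
def IsSimpleCStar : Prop :=
  (∃ x : R, x ≠ 0) ∧
    ∀ I : TwoSidedIdeal R, IsClosed (I : Set R) → (I : Set R) = {0} ∨ (I : Set R) = Set.univ

/-- `R` is σ-unital: it contains a strictly positive element `h`
(equivalently, `Her(h) = R`). -/
def SigmaUnital : Prop := ∃ h : R, 0 ≤ h ∧ her h = Set.univ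

/-- `R` is elementary: isomorphic to the algebra of compact operators on some Hilbert space. -/
def IsElementary : Prop :=
  ∃ (H : Type) (_ : NormedAddCommGroup H) (_ : InnerProductSpace ℂ H) (_ : CompleteSpace H)
    (φ : R →⋆ₙₐ[ℂ] (H →L[ℂ] H)), Function.Injective φ ∧
      Set.range φ = {T : H →L[ℂ] H | IsCompactOperator (⇑T)}

/-- `R` is purely infinite: `R ≇ ℂ` and `b ≲ a` for all nonzero positive `a, b`. -/
def PurelyInfinite : Prop :=
  (¬ ∃ φ : R →⋆ₙₐ[ℂ] ℂ, Function.Bijective φ) ∧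
    ∀ a b : R, 0 ≤ a → 0 ≤ b → a ≠ 0 → b ≠ 0 → CuntzLE b a

/-- `R` is finite: its minimal unitization contains no non-unitary isometry. -/
def IsFiniteCStar : Prop :=
  ∀ v : Unitization ℂ R, star v * v = 1 → v * star v = 1

/-- `R` has stable rank one: the invertible elements are dense in the minimal unitization. -/
def StableRankOne : Prop := Dense {x : Unitization ℂ R | IsUnit x}

variable {R}

/-- `c` represents `n·[a]` in the Cuntz semigroup: it is the sum of `n` mutually
orthogonal positive elements, each Cuntz equivalent to `a`. -/
def IsNFoldRep (n : ℕ) (a c : R) : Prop :=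
  ∃ f : Fin n → R, (∀ i, 0 ≤ f i) ∧ (∀ i, CuntzEq (f i) a) ∧
    (∀ i j, i ≠ j → f i * f j = 0) ∧ c = ∑ i, f i

/-- `s` represents the supremum of the increasing sequence of Cuntz classes `[y n]`. -/
def IsCuntzLUB (y : ℕ → R) (s : R) : Prop :=
  (∀ n, CuntzLE (y n) s) ∧ ∀ c : R, 0 ≤ c → (∀ n, CuntzLE (y n) c) → CuntzLE s c

/-- `[x] ≪ [y]` in the Cuntz semigroup. -/
def CuntzWayBelow (x y : R) : Prop :=
  ∀ yseq : ℕ → R, (∀ n, 0 ≤ yseq n) → (∀ n, CuntzLE (yseq n) (yseq (n + 1))) →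
    ∀ s : R, 0 ≤ s → IsCuntzLUB yseq s → CuntzLE y s → ∃ n₀, CuntzLE x (yseq n₀)

variable (R)

/-- The Cuntz semigroup of `R` is almost unperforated. -/
def AlmostUnperforated : Prop :=
  ∀ (a b : R) (k : ℕ), 1 ≤ k → 0 ≤ a → 0 ≤ b →
    (∃ c d : R, IsNFoldRep (k + 1) a c ∧ IsNFoldRep k b d ∧ CuntzLE c d) → CuntzLE a b

/-- The Cuntz semigroup of `R` is almost divisible. -/
def AlmostDivisible : Prop :=
  ∀ x y : R, 0 ≤ x → 0 ≤ y → CuntzWayBelow x y → ∀ n : ℕ, 1 ≤ n →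
    ∃ z : R, 0 ≤ z ∧ (∃ c : R, IsNFoldRep n z c ∧ CuntzLE c y) ∧
      (∃ c : R, IsNFoldRep (n + 1) z c ∧ CuntzLE x c)

/-! ### The stabilization `W ≅ A ⊗ K` -/

variable (A W : Type*) [NonUnitalCStarAlgebra A] [PartialOrder A] [StarOrderedRing A]
  [NonUnitalCStarAlgebra W] [PartialOrder W] [StarOrderedRing W]

/-- A realization of `W` as the stabilization `A ⊗ K`: the maps `emb i j : a ↦ a ⊗ e_{ij}`
are isometric, satisfy the matrix-unit relations, and have dense joint linear span. -/
structure Stabilization : Type _ where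
  emb : ℕ → ℕ → (A →ₗ[ℂ] W)
  emb_mul : ∀ (i j k l : ℕ) (a b : A),
    emb i j a * emb k l b = if j = k then emb i l (a * b) else 0
  emb_star : ∀ (i j : ℕ) (a : A), star (emb i j a) = emb j i (star a)
  norm_emb : ∀ (i j : ℕ) (a : A), ‖emb i j a‖ = ‖a‖
  dense_span : Dense (Submodule.span ℂ {w : W | ∃ (i j : ℕ) (a : A), w = emb i j a} : Set W)

variable {A W}

/-- The set `QT(A)` of quasitraces normalized on `A ⊆ A ⊗ K`. -/
def QTSet (SB : Stabilization A W) : Set (QuasiTrace W) :=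
  {τ | (⨆ a : {a : A // 0 ≤ a ∧ ‖a‖ ≤ 1}, τ.toFun (SB.emb 0 0 a)) = 1}

/-- The quasitraces normalized on the hereditary subalgebra `Her(c) ⊆ W`. -/
def QTSetHer (c : W) : Set (QuasiTrace W) :=
  {τ : QuasiTrace W |
    (⨆ a : {a : W // a ∈ her c ∧ 0 ≤ a ∧ ‖a‖ ≤ 1}, τ.toFun a) = 1}

/-- `ω(a) = 0` for `a ∈ W = A ⊗ K`, computed relative to `\overline{QT(Her(e))}^w`
for any nonzero `e ∈ Ped(A)₊`. -/
def OmegaZero (SB : Stabilization A W) (a : W) : Prop :=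
  ∀ e : A, 0 ≤ e → e ≠ 0 → e ∈ pedersen A →
    omegaOn (closure (QTSetHer (SB.emb 0 0 e))) a = 0

/-- `A` has tracial approximate oscillation zero. -/
def TAOZ (SB : Stabilization A W) : Prop :=
  ∀ e : A, 0 ≤ e → e ≠ 0 → e ∈ pedersen A →
    ∀ a : W, 0 ≤ a → a ∈ pedersen W →
      ∃ b : ℕ → W, (∀ n, 0 ≤ b n) ∧ (∀ n, ‖b n‖ ≤ 1) ∧
        (∀ n, b n ∈ pedersenIn (her a)) ∧
        Tendsto (fun n => omegaOn (closure (QTSetHer (SB.emb 0 0 e))) (b n)) atTop (𝓝 0) ∧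
        Tendsto (fun n => norm2On (closure (QTSetHer (SB.emb 0 0 e))) (a - b n)) atTop (𝓝 0)

/-! ### Affine functions on the quasitrace cone and the map `Γ` -/

variable (W) in
/-- `ρ = t·τ + (1-t)·σ` as quasitraces. -/
def IsCombo (t : ℝ) (τ σ ρ : QuasiTrace W) : Prop :=
  ∀ a : W, 0 ≤ a →
    ρ.toFun a = ENNReal.ofReal t * τ.toFun a + ENNReal.ofReal (1 - t) * σ.toFun a

variable (W) in
/-- `f` is affine on the quasitrace cone. -/
def IsAffineQT (f : QuasiTrace W → ℝ≥0∞) : Prop :=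
  ∀ t : ℝ, 0 ≤ t → t ≤ 1 → ∀ τ σ ρ : QuasiTrace W, IsCombo W t τ σ ρ →
    f ρ = ENNReal.ofReal t * f τ + ENNReal.ofReal (1 - t) * f σ

variable (W) in
/-- Membership in `Aff₊(QT̃(A))`. -/
def MemAffPlus (f : QuasiTrace W → ℝ≥0∞) : Prop :=
  (∀ τ, f τ = 0) ∨
    (Continuous f ∧ IsAffineQT W f ∧ (∀ τ, f τ < ∞) ∧
      (∀ τ : QuasiTrace W, ¬ τ.IsZero → 0 < f τ) ∧
      (∀ τ : QuasiTrace W, τ.IsZero → f τ = 0))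

variable (W) in
/-- Membership in `LAff₊(QT̃(A))`. -/
def MemLAffPlus (f : QuasiTrace W → ℝ≥0∞) : Prop :=
  ∃ g : ℕ → QuasiTrace W → ℝ≥0∞, (∀ n, MemAffPlus W (g n)) ∧
    (∀ n τ, g n τ ≤ g (n + 1) τ) ∧ ∀ τ, f τ = ⨆ n, g n τ

variable (W) in
/-- The canonical map `Γ : Cu(A) → LAff₊(QT̃(A))`, `Γ([a])(τ) = d_τ(a)`, is surjective. -/
def GammaSurjective : Prop :=
  ∀ f : QuasiTrace W → ℝ≥0∞, MemLAffPlus W f →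
    ∃ a : W, 0 ≤ a ∧ ∀ τ : QuasiTrace W, dTau τ a = f τ


section Helpers

set_option linter.unusedSectionVars false
variable {R}

/-! ### Algebraic preliminaries -/


lemma exists_quasi_inv (d : R) (hd : ‖d‖ < 1) :
    ∃ d' : R, d + d' + d * d' = 0 ∧ d + d' + d' * d = 0 := by
  have h1 : ‖-(d : Unitization ℂ R)‖ < 1 := by
    rw [norm_neg, Unitization.norm_inr]; exact hd
  obtain ⟨u, hu⟩ := isUnit_one_sub_of_norm_lt_one h1
  rw [sub_neg_eq_add] at hu
  have hq : IsQuasiregular d := by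
    rw [isQuasiregular_iff_isUnit' ℂ]
    exact ⟨u, hu⟩
  obtain ⟨y, h1, h2⟩ := isQuasiregular_iff.1 hq
  refine ⟨y, ?_, ?_⟩
  · rw [← h1, add_comm y d]
  · rw [← h2]

lemma pedersen_mul_right {f : R} (hf : f ∈ pedersen R) (b : R) : f * b ∈ pedersen R := by
  simp only [pedersen, pedersenIn, Set.mem_iInter] at hf ⊢
  intro I hI
  exact (hI.1.2.2.2.2 f (hf I hI) b (Set.mem_univ _)).1

lemma pedersen_mul_left {f : R} (hf : f ∈ pedersen R) (b : R) : b * f ∈ pedersen R := by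
  simp only [pedersen, pedersenIn, Set.mem_iInter] at hf ⊢
  intro I hI
  exact (hI.1.2.2.2.2 f (hf I hI) b (Set.mem_univ _)).2

lemma pedersen_add {f g : R} (hf : f ∈ pedersen R) (hg : g ∈ pedersen R) :
    f + g ∈ pedersen R := by
  simp only [pedersen, pedersenIn, Set.mem_iInter] at hf hg ⊢
  intro I hI
  exact hI.1.2.2.1 f (hf I hI) g (hg I hI)

lemma pedersen_zero : (0 : R) ∈ pedersen R := by
  simp only [pedersen, pedersenIn, Set.mem_iInter]
  intro I hI
  exact hI.1.2.1

/-- The basic membership criterion for the Pedersen ideal. -/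
lemma mem_pedersen_of_factor {f a h : R} (hf : f * (a * h) = f) : f ∈ pedersen R := by
  simp only [pedersen, pedersenIn, Set.mem_iInter]
  intro I hI
  obtain ⟨⟨_, h0, hadd, hneg, hmul⟩, hdense⟩ := hI
  have hpos : (0 : ℝ) < 1 / (‖h‖ + 1) := by positivity
  obtain ⟨b, hbI, hb⟩ := Metric.mem_closure_iff.1 (hdense (Set.mem_univ a)) _ hpos
  rw [dist_eq_norm] at hb
  have hd : ‖b * h - a * h‖ < 1 := by
    rw [← sub_mul]
    calc ‖(b - a) * h‖ ≤ ‖b - a‖ * ‖h‖ := norm_mul_le _ _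
      _ ≤ 1 / (‖h‖ + 1) * ‖h‖ := by
          gcongr; rw [norm_sub_rev]; exact hb.le
      _ < 1 := by
          rw [div_mul_eq_mul_div, one_mul, div_lt_one (by positivity)]; linarith
  obtain ⟨d', hd', _⟩ := exists_quasi_inv _ hd
  have key : f = f * b * h + f * b * h * d' := by
    have h1 : f * ((b * h - a * h) + d' + (b * h - a * h) * d') = 0 := by rw [hd', mul_zero]
    have h2 : f * (a * h) * d' = f * d' := by rw [hf]
    have : f * (b * h) - f + f * d' + (f * (b * h) * d' - f * d') = 0 := by
      rw [← h1, ← h2]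
      nth_rewrite 2 [← hf]
      noncomm_ring
      rw [← mul_assoc a h d', ← mul_assoc f (a * h) d', h2, ]
      abel
    rw [← sub_eq_zero, ← neg_eq_zero, ← this]
    noncomm_ring
  rw [key]
  have hz : f * b * h ∈ I := (hmul _ ((hmul _ hbI f (Set.mem_univ _)).2) h (Set.mem_univ _)).1
  exact hadd _ hz _ (hmul _ hz d' (Set.mem_univ _)).1

/-! ### Functional calculus preliminaries -/

/-- The continuous function `f_ε(t)/t`. -/
def cutQ (ε : ℝ) : ℝ → ℝ := fun t => cutoff ε t / max t (ε / 2)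

lemma cutoff_continuous (ε : ℝ) : Continuous (cutoff ε) := by
  unfold cutoff; fun_prop

lemma cutoff_nonneg (ε t : ℝ) : 0 ≤ cutoff ε t := by
  unfold cutoff; positivity

lemma cutoff_le_one (ε t : ℝ) : cutoff ε t ≤ 1 := min_le_left _ _

lemma cutoff_zero (ε : ℝ) : cutoff ε 0 = 0 := by
  unfold cutoff; norm_num

lemma cutoff_eq_zero {ε t : ℝ} (hε : 0 < ε) (h : t ≤ ε / 2) : cutoff ε t = 0 := by
  unfold cutoff
  have : 2 * t / ε - 1 ≤ 0 := by
    rw [sub_nonpos, div_le_one hε]; linarith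
  rw [max_eq_left this]; norm_num

lemma cutoff_eq_one {ε t : ℝ} (hε : 0 < ε) (h : ε ≤ t) : cutoff ε t = 1 := by
  unfold cutoff
  have : 1 ≤ 2 * t / ε - 1 := by
    rw [le_sub_iff_add_le, le_div_iff₀ hε]; linarith
  rw [min_eq_left]; exact le_max_of_le_right this

lemma cutQ_continuous {ε : ℝ} (hε : 0 < ε) : Continuous (cutQ ε) := by
  unfold cutQ
  refine (cutoff_continuous ε).div (by fun_prop) fun t => ?_
  have : ε / 2 ≤ max t (ε / 2) := le_max_right _ _
  positivity

lemma cutQ_nonneg {ε : ℝ} (hε : 0 < ε) (t : ℝ) : 0 ≤ cutQ ε t := by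
  unfold cutQ
  have := cutoff_nonneg ε t
  have : ε / 2 ≤ max t (ε / 2) := le_max_right _ _
  positivity

lemma cutQ_zero (ε : ℝ) : cutQ ε 0 = 0 := by
  unfold cutQ; rw [cutoff_zero, zero_div]

lemma cutQ_mul {ε : ℝ} (hε : 0 < ε) (t : ℝ) : cutQ ε t * t = cutoff ε t := by
  unfold cutQ
  rcases le_total t (ε / 2) with h | h
  · rw [cutoff_eq_zero hε h]; simp
  · rw [max_eq_left h]
    have : t ≠ 0 := by linarith
    field_simp

lemma cmul (φ ψ : ℝ → ℝ) (hφ : Continuous φ) (h0 : φ 0 = 0) (hψ : Continuous ψ) (h0' : ψ 0 = 0)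
    (a : R) : cfcₙ φ a * cfcₙ ψ a = cfcₙ (fun t => φ t * ψ t) a :=
  (cfcₙ_mul φ ψ a hφ.continuousOn h0 hψ.continuousOn h0').symm

lemma csub (φ ψ : ℝ → ℝ) (hφ : Continuous φ) (h0 : φ 0 = 0) (hψ : Continuous ψ) (h0' : ψ 0 = 0)
    (a : R) : cfcₙ φ a - cfcₙ ψ a = cfcₙ (fun t => φ t - ψ t) a :=
  (cfcₙ_sub φ ψ a hφ.continuousOn h0 hψ.continuousOn h0').symm

lemma qspec_nonneg {a : R} (ha : 0 ≤ a) {t : ℝ} (ht : t ∈ quasispectrum ℝ a) : 0 ≤ t :=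
  quasispectrum_nonneg_of_nonneg a ha t ht

lemma fEps_nonneg (ε : ℝ) (a : R) : 0 ≤ fEps ε a :=
  cfcₙ_nonneg fun t _ => cutoff_nonneg ε t

lemma fEps_norm_le (ε : ℝ) (a : R) : ‖fEps ε a‖ ≤ 1 :=
  norm_cfcₙ_le fun t _ => by
    rw [Real.norm_of_nonneg (cutoff_nonneg ε t)]; exact cutoff_le_one ε t

lemma fEps_star (ε : ℝ) (a : R) : star (fEps ε a) = fEps ε a :=
  (IsSelfAdjoint.of_nonneg (fEps_nonneg ε a)).star_eq

lemma fEps_mul_fEps {δ ε : ℝ} (hδ : 0 < δ) (h : δ ≤ ε / 2) (a : R) :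
    fEps δ a * fEps ε a = fEps ε a := by
  unfold fEps
  rw [← cfcₙ_mul _ _ a (cutoff_continuous _).continuousOn (cutoff_zero _)
    (cutoff_continuous _).continuousOn (cutoff_zero _)]
  refine cfcₙ_congr fun t _ => ?_
  rcases le_total t (ε / 2) with h' | h'
  · simp only [cutoff_eq_zero (by linarith : 0 < ε) h', mul_zero]
  · simp only [cutoff_eq_one hδ (h.trans h'), one_mul]

lemma fEps_mul_fEps' {δ ε : ℝ} (hδ : 0 < δ) (h : δ ≤ ε / 2) (a : R) :
    fEps ε a * fEps δ a = fEps ε a := by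
  have := congrArg star (fEps_mul_fEps hδ h a)
  rwa [star_mul, fEps_star, fEps_star] at this

/-- `f_ε(a) = g(a) a` with `g = f_ε/t`. -/
lemma fEps_eq_cutQ_mul {ε : ℝ} (hε : 0 < ε) {a : R} (ha : 0 ≤ a) :
    fEps ε a = cfcₙ (cutQ ε) a * a := by
  have hsa : IsSelfAdjoint a := IsSelfAdjoint.of_nonneg ha
  have h := cmul (cutQ ε) (fun t => t) (cutQ_continuous hε) (cutQ_zero _) continuous_id rfl a
  rw [cfcₙ_id' ℝ a] at h
  rw [h]
  exact cfcₙ_congr fun t _ => (cutQ_mul hε t).symm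

lemma fEps_mem_pedersen {ε : ℝ} (hε : 0 < ε) {a : R} (ha : 0 ≤ a) :
    fEps ε a ∈ pedersen R := by
  have h2 : fEps (ε / 2) a = a * cfcₙ (cutQ (ε / 2)) a := by
    have := congrArg star (fEps_eq_cutQ_mul (half_pos hε) ha)
    rwa [star_mul, fEps_star, (IsSelfAdjoint.of_nonneg ha).star_eq,
      (cfcₙ_predicate (cutQ (ε / 2)) a : IsSelfAdjoint _).star_eq] at this
  refine mem_pedersen_of_factor (a := a) (h := cfcₙ (cutQ (ε / 2)) a) ?_
  rw [← h2]
  exact fEps_mul_fEps' (half_pos hε) le_rfl a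

/-- `f_ε(a) = h(a) a h(a)` with `h = (f_ε/t)^{1/2}`. -/
def cutH (ε : ℝ) (a : R) : R := cfcₙ (fun t => √(cutQ ε t)) a

lemma cutH_star (ε : ℝ) (a : R) : star (cutH ε a) = cutH ε a :=
  (cfcₙ_predicate _ a : IsSelfAdjoint _).star_eq

lemma fEps_eq_cutH {ε : ℝ} (hε : 0 < ε) {a : R} (ha : 0 ≤ a) :
    fEps ε a = cutH ε a * a * cutH ε a := by
  have hsa : IsSelfAdjoint a := IsSelfAdjoint.of_nonneg ha
  have hc : Continuous fun t => √(cutQ ε t) := (cutQ_continuous hε).sqrt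
  have h0 : √(cutQ ε 0) = 0 := by rw [cutQ_zero, Real.sqrt_zero]
  unfold cutH
  have h1 : cfcₙ (fun t => √(cutQ ε t)) a * a = cfcₙ (fun t => √(cutQ ε t) * t) a := by
    have h := cmul _ (fun t => t) hc h0 continuous_id rfl a
    rwa [cfcₙ_id' ℝ a] at h
  rw [h1, cmul (fun t => √(cutQ ε t) * t) _ (hc.mul continuous_id) (by simp) hc h0]
  refine cfcₙ_congr fun t _ => ?_
  have : √(cutQ ε t) * t * √(cutQ ε t) = (√(cutQ ε t) * √(cutQ ε t)) * t := by ring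
  simp only [this, Real.mul_self_sqrt (cutQ_nonneg hε t), cutQ_mul hε]

lemma norm_sub_mul_fEps_sq_le {ε : ℝ} (hε : 0 < ε) (x : R) :
    ‖x - x * fEps ε (star x * x)‖ ^ 2 ≤ ε := by
  set a := star x * x with ha_def
  have ha : 0 ≤ a := star_mul_self_nonneg x
  have hsa : IsSelfAdjoint a := IsSelfAdjoint.of_nonneg ha
  have hc := cutoff_continuous ε
  have key : star (x - x * fEps ε a) * (x - x * fEps ε a)
      = cfcₙ (fun t => t - t * cutoff ε t - cutoff ε t * (t - t * cutoff ε t)) a := by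
    have e1 : a * fEps ε a = cfcₙ (fun t => t * cutoff ε t) a := by
      have h := cmul (fun t => t) _ continuous_id rfl hc (cutoff_zero _) a
      rwa [cfcₙ_id' ℝ a] at h
    have c1 : Continuous (fun t => t * cutoff ε t) := by fun_prop
    have c2 : Continuous (fun t => t - t * cutoff ε t) := by fun_prop
    have c3 : Continuous (fun t => cutoff ε t * (t - t * cutoff ε t)) := by fun_prop
    have e2 : a - a * fEps ε a = cfcₙ (fun t => t - t * cutoff ε t) a := by
      have h := csub (fun t => t) _ continuous_id rfl c1 (by simp) a
      rwa [cfcₙ_id' ℝ a, ← e1] at h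
    have e3 : fEps ε a * (a - a * fEps ε a)
        = cfcₙ (fun t => cutoff ε t * (t - t * cutoff ε t)) a := by
      rw [e2]
      exact cmul _ _ hc (cutoff_zero _) c2 (by simp) a
    rw [← csub _ _ c2 (by simp) c3 (by simp), ← e2, ← e3]
    change _ = a - a * fEps ε a - fEps ε a * (a - a * fEps ε a)
    rw [star_sub, star_mul, fEps_star]
    rw [sub_mul, mul_sub, mul_sub, mul_assoc, mul_assoc, ← mul_assoc (star x) x, ← ha_def]
    rw [mul_sub]
  rw [pow_two, ← CStarRing.norm_star_mul_self, key]
  refine norm_cfcₙ_le fun t ht => ?_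
  have ht0 := qspec_nonneg ha ht
  have h1 := cutoff_nonneg ε t
  have h2 := cutoff_le_one ε t
  have e : t - t * cutoff ε t - cutoff ε t * (t - t * cutoff ε t) = t * (1 - cutoff ε t) ^ 2 := by
    ring
  rw [e, Real.norm_of_nonneg (by positivity)]
  rcases le_total ε t with h | h
  · rw [cutoff_eq_one hε h]; simpa using hε.le
  · calc t * (1 - cutoff ε t) ^ 2 ≤ t * 1 := by
          gcongr
          exact pow_le_one₀ (by linarith) (by linarith)
      _ ≤ ε := by linarith

lemma tendsto_mul_fEps (x : R) :
    Tendsto (fun n : ℕ => x * fEps (1 / (n + 1)) (star x * x)) atTop (𝓝 x) := by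
  rw [tendsto_iff_norm_sub_tendsto_zero]
  have h1 : Tendsto (fun n : ℕ => √(1 / ((n : ℝ) + 1))) atTop (𝓝 0) := by
    rw [← Real.sqrt_zero]
    exact (Real.continuous_sqrt.tendsto 0).comp tendsto_one_div_add_atTop_nhds_zero_nat
  refine squeeze_zero (fun _ => norm_nonneg _) (fun n => ?_) h1
  rw [norm_sub_rev]
  exact Real.le_sqrt_of_sq_le (norm_sub_mul_fEps_sq_le (by positivity) x)



/-! ### Dimension functions -/

lemma mul_self_le_of_norm_le_one {q : R} (hq : 0 ≤ q) (hq1 : ‖q‖ ≤ 1) : q * q ≤ q := by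
  set s := CFC.sqrt q with hs
  have hs0 : 0 ≤ s := CFC.sqrt_nonneg q
  have hss : s * s = q := CFC.sqrt_mul_sqrt_self q hq
  have hst : star s = s := (IsSelfAdjoint.of_nonneg hs0).star_eq
  have h := CStarAlgebra.star_left_conjugate_le_norm_smul (a := s) (b := q)
    (IsSelfAdjoint.of_nonneg hq)
  rw [hst, hss] at h
  have h2 : s * q * s = q * q := by
    conv_lhs => rw [← hss]
    rw [← hss]; simp only [mul_assoc]
  rw [h2] at h
  refine h.trans ?_
  have : q - ‖q‖ • q = (1 - ‖q‖) • q := by rw [sub_smul, one_smul]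
  rw [← sub_nonneg, this]
  exact smul_nonneg (by linarith) hq

lemma QuasiTrace.le_of_unit (τ : QuasiTrace R) {F q : R} (hF : 0 ≤ F) (hF1 : ‖F‖ ≤ 1)
    (hq : 0 ≤ q) (hq1 : ‖q‖ ≤ 1) (h : q * F = F) : τ.toFun F ≤ τ.toFun q := by
  have hFs : star F = F := (IsSelfAdjoint.of_nonneg hF).star_eq
  have hqs : star q = q := (IsSelfAdjoint.of_nonneg hq).star_eq
  have h' : F * q = F := by
    have := congrArg star h
    rwa [star_mul, hFs, hqs] at this
  have hle : F ≤ q := by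
    have h1 := CStarAlgebra.star_left_conjugate_le_norm_smul (a := q) (b := F)
      (IsSelfAdjoint.of_nonneg hF)
    rw [hqs, h, h'] at h1
    have hqq : 0 ≤ q * q := by
      have := star_mul_self_nonneg q
      rwa [hqs] at this
    have h2 : ‖F‖ • (q * q) ≤ q * q := by
      have : q * q - ‖F‖ • (q * q) = (1 - ‖F‖) • (q * q) := by rw [sub_smul, one_smul]
      rw [← sub_nonneg, this]
      exact smul_nonneg (by linarith) hqq
    exact h1.trans (h2.trans (mul_self_le_of_norm_le_one hq hq1))
  have hadd := τ.map_add_of_commute F (q - F) hF (sub_nonneg.2 hle) (by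
    rw [mul_sub, sub_mul, h, h'])
  rw [add_sub_cancel] at hadd
  rw [hadd]
  exact le_self_add

lemma QuasiTrace.fEps_anti (τ : QuasiTrace R) {δ ε : ℝ} (hδ : 0 < δ) (h : δ ≤ ε / 2) (a : R) :
    τ.toFun (fEps ε a) ≤ τ.toFun (fEps δ a) :=
  τ.le_of_unit (fEps_nonneg _ _) (fEps_norm_le _ _) (fEps_nonneg _ _) (fEps_norm_le _ _)
    (fEps_mul_fEps hδ h a)

lemma QuasiTrace.fEps_le_dTau (τ : QuasiTrace R) {ε : ℝ} (hε : 0 < ε) (a : R) :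
    τ.toFun (fEps ε a) ≤ dTau τ a := by
  obtain ⟨n, hn⟩ := exists_nat_one_div_lt (half_pos hε)
  exact (τ.fEps_anti (by positivity) hn.le a).trans
    (le_iSup (fun n : ℕ => τ.toFun (fEps (1 / ((n : ℝ) + 1)) a)) n)

/-- The rank function `D_τ(x) = d_τ(x* x)`. -/
def rk (τ : QuasiTrace R) (x : R) : ℝ≥0∞ := dTau τ (star x * x)

lemma QuasiTrace.le_of_tendsto (τ : QuasiTrace R) {ι : Type*} {l : Filter ι} [l.NeBot]
    {u : ι → R} {F : R} (hu : ∀ i, 0 ≤ u i) (hF : 0 ≤ F) (h : Tendsto u l (𝓝 F)) {C : ℝ≥0∞}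
    (hC : ∀ i, τ.toFun (u i) ≤ C) : τ.toFun F ≤ C := by
  by_contra hlt
  rw [not_le] at hlt
  have h1 := τ.lowerSemicontinuousOn F hF C hlt
  have h2 : Tendsto u l (𝓝[{a : R | 0 ≤ a}] F) :=
    tendsto_nhdsWithin_iff.2 ⟨h, Eventually.of_forall hu⟩
  obtain ⟨i, hi⟩ := (h2.eventually h1).exists
  exact absurd (hC i) (not_le.2 hi)

/-- Key estimate: a positive contraction in the closed left ideal generated by `x` has trace
at most the rank of `x`. -/
lemma QuasiTrace.le_rk_of_tendsto (τ : QuasiTrace R) {F x : R} (hF : 0 ≤ F) (hF1 : ‖F‖ ≤ 1)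
    (h : Tendsto (fun n : ℕ => F * fEps (1 / (n + 1)) (star x * x)) atTop (𝓝 F)) :
    τ.toFun F ≤ rk τ x := by
  have hFs : star F = F := (IsSelfAdjoint.of_nonneg hF).star_eq
  set k : ℕ → R := fun n => fEps (1 / (n + 1)) (star x * x) with hk
  have hks : ∀ n, star (k n) = k n := fun n => fEps_star _ _
  have hk1 : ∀ n, ‖k n‖ ≤ 1 := fun n => fEps_norm_le _ _
  have h' : Tendsto (fun n : ℕ => k n * F) atTop (𝓝 F) := by
    have := (continuous_star.tendsto F).comp h
    rw [hFs] at this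
    refine this.congr fun n => ?_
    simp only [Function.comp]
    rw [star_mul, hFs]; exact congrArg (· * F) (hks n)
  have h2 : Tendsto (fun n : ℕ => k n * F * k n) atTop (𝓝 F) := by
    rw [tendsto_iff_norm_sub_tendsto_zero] at h h' ⊢
    have hs : Tendsto (fun n : ℕ => ‖F * k n - F‖ + ‖k n * F - F‖) atTop (𝓝 0) := by
      have h3 := h.add h'
      rwa [add_zero] at h3
    refine squeeze_zero (fun _ => norm_nonneg _) (fun n => ?_) hs
    have e : k n * F * k n - F = k n * (F * k n - F) + (k n * F - F) := by
      rw [mul_sub, mul_assoc]; abel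
    calc ‖k n * F * k n - F‖ ≤ ‖k n * (F * k n - F)‖ + ‖k n * F - F‖ := by
          rw [e]; exact norm_add_le _ _
      _ ≤ ‖k n‖ * ‖F * k n - F‖ + ‖k n * F - F‖ := by gcongr; exact norm_mul_le _ _
      _ ≤ 1 * ‖F * k n - F‖ + ‖k n * F - F‖ := by gcongr; exact hk1 n
      _ = _ := by rw [one_mul]
  have hpos : ∀ n, 0 ≤ k n * F * k n := fun n => by
    have := star_left_conjugate_nonneg hF (k n)
    rwa [hks] at this
  refine τ.le_of_tendsto hpos hF h2 fun n => ?_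
  have hn : (0 : ℝ) < 1 / (n + 1) := by positivity
  refine le_trans ?_ (τ.fEps_le_dTau (half_pos hn) (star x * x))
  refine τ.le_of_unit (hpos n) ?_ (fEps_nonneg _ _) (fEps_norm_le _ _) ?_
  · calc ‖k n * F * k n‖ ≤ ‖k n‖ * ‖F‖ * ‖k n‖ := norm_mul₃_le
      _ ≤ 1 * 1 * 1 := by gcongr <;> exact hk1 n
      _ = 1 := by norm_num
  · rw [← mul_assoc, ← mul_assoc]
    simp only [hk]
    rw [fEps_mul_fEps (half_pos hn) le_rfl]

lemma QuasiTrace.le_rk_of_left_mul (τ : QuasiTrace R) {F x l : R} (hF : 0 ≤ F) (hF1 : ‖F‖ ≤ 1)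
    (h : F = l * x) : τ.toFun F ≤ rk τ x := by
  refine τ.le_rk_of_tendsto hF hF1 ?_
  have := (tendsto_mul_fEps x).const_mul l
  rw [← h] at this
  refine this.congr fun n => ?_
  rw [h, mul_assoc]

lemma QuasiTrace.le_rk_self (τ : QuasiTrace R) {F : R} (hF : 0 ≤ F) (hF1 : ‖F‖ ≤ 1) :
    τ.toFun F ≤ rk τ F :=
  τ.le_rk_of_tendsto hF hF1 (tendsto_mul_fEps F)

lemma rk_mul_left_le (τ : QuasiTrace R) (a x : R) : rk τ (a * x) ≤ rk τ x := by
  refine iSup_le fun n => ?_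
  have hn : (0 : ℝ) < 1 / (n + 1) := by positivity
  refine τ.le_rk_of_left_mul (fEps_nonneg _ _) (fEps_norm_le _ _)
    (l := cfcₙ (cutQ (1 / (n + 1))) (star (a * x) * (a * x)) * star (a * x) * a) ?_
  rw [fEps_eq_cutQ_mul hn (star_mul_self_nonneg _)]
  simp only [mul_assoc]

lemma rk_star_le (τ : QuasiTrace R) (x : R) : rk τ (star x) ≤ rk τ x := by
  refine iSup_le fun n => ?_
  have hn : (0 : ℝ) < 1 / (n + 1) := by positivity
  set ε : ℝ := 1 / (n + 1)
  rw [star_star]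
  set z := cutH ε (x * star x) * x with hz
  have e1 : fEps ε (x * star x) = z * star z := by
    rw [fEps_eq_cutH hn (mul_star_self_nonneg _), hz, star_mul, cutH_star]
    simp only [mul_assoc]
  rw [e1, ← τ.map_star_mul_self z]
  refine τ.le_rk_of_left_mul (star_mul_self_nonneg z) ?_ (l := star z * cutH ε (x * star x)) ?_
  · rw [CStarRing.norm_star_mul_self, ← CStarRing.norm_self_mul_star, ← e1]
    exact fEps_norm_le _ _
  · rw [mul_assoc, ← hz]

lemma rk_star (τ : QuasiTrace R) (x : R) : rk τ (star x) = rk τ x :=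
  le_antisymm (rk_star_le τ x) (by simpa using rk_star_le τ (star x))

lemma rk_mul_right_le (τ : QuasiTrace R) (x b : R) : rk τ (x * b) ≤ rk τ x := by
  rw [← rk_star, star_mul, ← rk_star τ x]
  exact rk_mul_left_le τ _ _

lemma rk_zero (τ : QuasiTrace R) : rk τ 0 = 0 := by
  refine le_antisymm (iSup_le fun n => ?_) bot_le
  have : fEps (1 / ((n : ℝ) + 1)) (star (0 : R) * 0) = 0 := by
    rw [mul_zero, fEps, cfcₙ_apply_zero]
  rw [this, τ.map_zero]

lemma rk_neg (τ : QuasiTrace R) (x : R) : rk τ (-x) = rk τ x := by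
  unfold rk; rw [star_neg, neg_mul_neg]

lemma continuous_fEps_star_mul (ε : ℝ) : Continuous fun x : R => fEps ε (star x * x) := by
  unfold fEps
  exact Continuous.cfcₙ_of_mem_nhdsSet (s := Set.univ) (cutoff ε) Filter.univ_mem (by fun_prop)
    (fun x => IsSelfAdjoint.star_mul_self x) (cutoff_continuous ε).continuousOn (cutoff_zero ε)

lemma rk_le_of_tendsto (τ : QuasiTrace R) {ι : Type*} {l : Filter ι} [l.NeBot]
    {u : ι → R} {x : R} (h : Tendsto u l (𝓝 x)) {C : ℝ≥0∞}
    (hC : ∀ i, rk τ (u i) ≤ C) : rk τ x ≤ C := by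
  refine iSup_le fun n => ?_
  refine τ.le_of_tendsto (u := fun i => fEps (1 / (n + 1)) (star (u i) * u i))
    (fun i => fEps_nonneg _ _) (fEps_nonneg _ _)
    (((continuous_fEps_star_mul _).tendsto x).comp h) fun i => ?_
  exact (τ.fEps_le_dTau (by positivity) _).trans (hC i)

lemma rk_add_le_of_orthogonal (τ : QuasiTrace R) {x y : R} (h1 : star x * y = 0)
    (h2 : x * star y = 0) : rk τ (x + y) ≤ rk τ x + rk τ y := by
  have h3 : star y * x = 0 := by
    have := congrArg star h1
    rwa [star_mul, star_star, star_zero] at this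
  have h4 : y * star x = 0 := by
    have := congrArg star h2
    rwa [star_mul, star_star, star_zero] at this
  set a := star x * x with ha
  set b := star y * y with hb
  have hc : star (x + y) * (x + y) = a + b := by
    rw [star_add, add_mul, mul_add, mul_add, h1, h3, ha, hb]; abel
  have hab : a * b = 0 := by
    rw [ha, hb, mul_assoc, ← mul_assoc x, h2, zero_mul, mul_zero]
  have hba : b * a = 0 := by
    rw [ha, hb, mul_assoc, ← mul_assoc y, h4, zero_mul, mul_zero]
  have ha0 : 0 ≤ a := star_mul_self_nonneg x
  have hb0 : 0 ≤ b := star_mul_self_nonneg y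
  refine iSup_le fun n => ?_
  have hn : (0 : ℝ) < 1 / (n + 1) := by positivity
  set ε : ℝ := 1 / (n + 1)
  rw [hc]
  set h := cutH ε (a + b) with hh
  have hhs : star h = h := cutH_star _ _
  have hF : fEps ε (a + b) = h * a * h + h * b * h := by
    rw [fEps_eq_cutH hn (add_nonneg ha0 hb0), mul_add, add_mul]
  have hcomm : Commute a h := by
    have : Commute (a + b) a := by
      change (a + b) * a = a * (a + b)
      rw [add_mul, mul_add, hab, hba]
    exact (this.cfcₙ_real _).symm
  have p1 : 0 ≤ h * a * h := by
    have := star_left_conjugate_nonneg ha0 h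
    rwa [hhs] at this
  have p2 : 0 ≤ h * b * h := by
    have := star_left_conjugate_nonneg hb0 h
    rwa [hhs] at this
  have hcommb : Commute b h := by
    have : Commute (a + b) b := by
      change (a + b) * b = b * (a + b)
      rw [add_mul, mul_add, hab, hba]
    exact (this.cfcₙ_real _).symm
  have z1 : (h * a * h) * (h * b * h) = 0 := by
    have : (h * a * h) * (h * b * h) = h * (a * h) * h * b * h := by simp only [mul_assoc]
    rw [this, hcomm.eq]
    have : h * (h * a) * h * b * h = h * h * (a * h) * b * h := by simp only [mul_assoc]
    rw [this, hcomm.eq]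
    have : h * h * (h * a) * b * h = h * h * h * (a * b) * h := by simp only [mul_assoc]
    rw [this, hab, mul_zero, zero_mul]
  have z2 : (h * b * h) * (h * a * h) = 0 := by
    have := congrArg star z1
    rw [star_mul, (IsSelfAdjoint.of_nonneg p1).star_eq, (IsSelfAdjoint.of_nonneg p2).star_eq,
      star_zero] at this
    exact this
  have n0 : ‖h * a * h + h * b * h‖ ≤ 1 := by rw [← hF]; exact fEps_norm_le _ _
  have n1 : ‖h * a * h‖ ≤ 1 :=
    (CStarAlgebra.norm_le_norm_of_nonneg_of_le p1 (le_add_of_nonneg_right p2)).trans n0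
  have n2 : ‖h * b * h‖ ≤ 1 :=
    (CStarAlgebra.norm_le_norm_of_nonneg_of_le p2 (le_add_of_nonneg_left p1)).trans n0
  rw [hF, τ.map_add_of_commute _ _ p1 p2 (z1.trans z2.symm)]
  refine add_le_add (τ.le_rk_of_left_mul p1 n1 (l := h * h * star x) ?_)
    (τ.le_rk_of_left_mul p2 n2 (l := h * h * star y) ?_)
  · rw [mul_assoc h a h, hcomm.eq, ha]; simp only [mul_assoc]
  · rw [mul_assoc h b h, hcommb.eq, hb]; simp only [mul_assoc]



/-! ### The stabilization -/

section Stab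

variable (SB : Stabilization A W)

/-- The shifted diagonal `∑_{i<n} b ⊗ e_{s+i,i}`. -/
def Stabilization.diagS (s n : ℕ) (b : A) : W := ∑ i ∈ Finset.range n, SB.emb (s + i) i b

lemma Stabilization.star_diagS_mul (s t n : ℕ) (b c : A) :
    star (SB.diagS s n b) * SB.diagS t n c =
      ∑ i ∈ Finset.range n, ∑ j ∈ Finset.range n,
        if s + i = t + j then SB.emb i j (star b * c) else 0 := by
  unfold Stabilization.diagS
  rw [star_sum, Finset.sum_mul_sum]
  refine Finset.sum_congr rfl fun i _ => Finset.sum_congr rfl fun j _ => ?_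
  rw [SB.emb_star, SB.emb_mul]

lemma Stabilization.star_diagS_mul_same (s n : ℕ) (b c : A) :
    star (SB.diagS s n b) * SB.diagS s n c = SB.diagS 0 n (star b * c) := by
  rw [SB.star_diagS_mul]
  unfold Stabilization.diagS
  refine Finset.sum_congr rfl fun i hi => ?_
  simp only [add_right_inj, zero_add]
  rw [Finset.sum_ite_eq, if_pos hi]

lemma Stabilization.star_diagS_mul_ne (n : ℕ) (b c : A) :
    star (SB.diagS 0 n b) * SB.diagS n n c = 0 := by
  rw [SB.star_diagS_mul]
  refine Finset.sum_eq_zero fun i hi => Finset.sum_eq_zero fun j hj => ?_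
  rw [if_neg]
  have := Finset.mem_range.1 hi
  omega

/-- The diagonal embedding as a star homomorphism. -/
def Stabilization.diag (n : ℕ) : A →⋆ₙₐ[ℂ] W where
  toFun b := SB.diagS 0 n b
  map_smul' c b := by
    simp [Stabilization.diagS, Finset.smul_sum]
  map_zero' := by simp [Stabilization.diagS]
  map_add' b c := by simp [Stabilization.diagS, Finset.sum_add_distrib]
  map_mul' b c := by
    have h := SB.star_diagS_mul_same 0 n (star b) c
    rw [star_star] at h
    rw [← h]
    congr 1
    simp [Stabilization.diagS, SB.emb_star]
  map_star' b := by
    simp [Stabilization.diagS, SB.emb_star]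

lemma Stabilization.diag_apply (n : ℕ) (b : A) :
    SB.diag n b = ∑ i ∈ Finset.range n, SB.emb i i b := by
  change SB.diagS 0 n b = _
  simp [Stabilization.diagS]

lemma Stabilization.norm_diag_le (n : ℕ) (b : A) : ‖SB.diag n b‖ ≤ ‖b‖ :=
  NonUnitalStarAlgHom.norm_apply_le _ _

lemma Stabilization.diag_mul_emb (n i j : ℕ) (hi : i < n) (b c : A) :
    SB.diag n b * SB.emb i j c = SB.emb i j (b * c) := by
  rw [SB.diag_apply, Finset.sum_mul]
  simp only [SB.emb_mul]
  rw [Finset.sum_eq_single i]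
  · simp
  · intro k _ hk; rw [if_neg hk]
  · intro h; exact absurd (Finset.mem_range.2 hi) h

/-- The net of contractions `Q = diag n (u u)` converging to the identity. -/
lemma Stabilization.tendsto_diag_mul (x : W) :
    Tendsto (fun p : ℕ × A => SB.diag p.1 (p.2 * p.2) * x)
      (atTop ×ˢ CStarAlgebra.approximateUnit A) (𝓝 x) := by
  have hU := CStarAlgebra.increasingApproximateUnit A
  have hne : (CStarAlgebra.approximateUnit A).NeBot := hU.neBot
  have hbd : ∀ᶠ p : ℕ × A in atTop ×ˢ CStarAlgebra.approximateUnit A,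
      ‖SB.diag p.1 (p.2 * p.2)‖ ≤ 1 := by
    have := (hU.eventually_norm).prod_inr (atTop : Filter ℕ)
    filter_upwards [this] with p hp
    refine (SB.norm_diag_le _ _).trans ((norm_mul_le _ _).trans ?_)
    exact mul_le_one₀ hp (norm_nonneg _) hp
  have hspan : ∀ y ∈ Submodule.span ℂ {w : W | ∃ (i j : ℕ) (a : A), w = SB.emb i j a},
      Tendsto (fun p : ℕ × A => SB.diag p.1 (p.2 * p.2) * y)
      (atTop ×ˢ CStarAlgebra.approximateUnit A) (𝓝 y) := by
    intro y hy
    induction hy using Submodule.span_induction with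
    | mem y hy =>
      obtain ⟨i, j, a, rfl⟩ := hy
      have h1 : Tendsto (fun u : A => u * a) (CStarAlgebra.approximateUnit A) (𝓝 a) :=
        hU.tendsto_mul_right a
      have h2 : Tendsto (fun u : A => u * (u * a)) (CStarAlgebra.approximateUnit A) (𝓝 a) := by
        have h3 : Tendsto (fun u : A => u * (u * a - a)) (CStarAlgebra.approximateUnit A)
            (𝓝 0) := by
          rw [tendsto_iff_norm_sub_tendsto_zero] at h1
          refine squeeze_zero_norm' ?_ h1
          filter_upwards [hU.eventually_norm] with u hu
          refine (norm_mul_le _ _).trans ?_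
          exact mul_le_of_le_one_left (norm_nonneg _) hu
        have h4 := h3.add h1
        rw [zero_add] at h4
        refine h4.congr fun u => ?_
        rw [mul_sub]; abel
      have hiso : Continuous (SB.emb i j) := by
        refine AddMonoidHomClass.continuous_of_bound (SB.emb i j) 1 fun b => ?_
        rw [SB.norm_emb, one_mul]
      have h5 : Tendsto (fun p : ℕ × A => SB.emb i j (p.2 * (p.2 * a)))
          (atTop ×ˢ CStarAlgebra.approximateUnit A) (𝓝 (SB.emb i j a)) :=
        ((hiso.tendsto a).comp h2).comp tendsto_snd
      refine h5.congr' ?_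
      filter_upwards [(eventually_gt_atTop i).prod_inl (CStarAlgebra.approximateUnit A)] with p hp
      rw [SB.diag_mul_emb _ _ _ hp, mul_assoc]
    | zero => simp
    | add y z _ _ hy hz => simpa only [mul_add] using hy.add hz
    | smul c y _ hy => simpa only [mul_smul_comm] using hy.const_smul c
  rw [Metric.tendsto_nhds]
  intro ε hε
  obtain ⟨y, hy, hxy⟩ := Metric.dense_iff.1 SB.dense_span x (ε / 3) (by positivity)
  have := (Metric.tendsto_nhds.1 (hspan y hxy)) (ε / 3) (by positivity)
  filter_upwards [this, hbd] with p h1 h2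
  rw [dist_eq_norm] at h1 ⊢
  rw [Metric.mem_ball, dist_eq_norm] at hy
  set Q := SB.diag p.1 (p.2 * p.2)
  have e : Q * x - x = (Q * y - y) + (y - x) - Q * (y - x) := by
    rw [mul_sub]; abel
  calc ‖Q * x - x‖ ≤ ‖Q * y - y‖ + ‖y - x‖ + ‖Q * (y - x)‖ := by
        rw [e]
        exact (norm_sub_le _ _).trans (by gcongr; exact norm_add_le _ _)
    _ ≤ ‖Q * y - y‖ + ‖y - x‖ + ‖y - x‖ := by
        gcongr
        exact (norm_mul_le _ _).trans (mul_le_of_le_one_left (norm_nonneg _) h2)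
    _ < ε := by linarith

lemma Stabilization.tendsto_conj (x : W) :
    Tendsto (fun p : ℕ × A => SB.diag p.1 (p.2 * p.2) * x * star (SB.diag p.1 (p.2 * p.2)))
      (atTop ×ˢ CStarAlgebra.approximateUnit A) (𝓝 x) := by
  have hU := CStarAlgebra.increasingApproximateUnit A
  have hne : (CStarAlgebra.approximateUnit A).NeBot := hU.neBot
  have hbd : ∀ᶠ p : ℕ × A in atTop ×ˢ CStarAlgebra.approximateUnit A,
      ‖SB.diag p.1 (p.2 * p.2)‖ ≤ 1 := by
    have := (hU.eventually_norm).prod_inr (atTop : Filter ℕ)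
    filter_upwards [this] with p hp
    refine (SB.norm_diag_le _ _).trans ((norm_mul_le _ _).trans ?_)
    exact mul_le_one₀ hp (norm_nonneg _) hp
  have h1 := SB.tendsto_diag_mul x
  have h2 : Tendsto (fun p : ℕ × A => x * star (SB.diag p.1 (p.2 * p.2)))
      (atTop ×ˢ CStarAlgebra.approximateUnit A) (𝓝 x) := by
    have := (continuous_star.tendsto _).comp (SB.tendsto_diag_mul (star x))
    rw [star_star] at this
    refine this.congr fun p => ?_
    simp only [Function.comp, star_mul, star_star]
  have h3 : Tendsto (fun p : ℕ × A => SB.diag p.1 (p.2 * p.2) *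
      (x * star (SB.diag p.1 (p.2 * p.2)) - x))
      (atTop ×ˢ CStarAlgebra.approximateUnit A) (𝓝 0) := by
    rw [tendsto_iff_norm_sub_tendsto_zero] at h2
    refine squeeze_zero_norm' ?_ h2
    filter_upwards [hbd] with p hp
    exact (norm_mul_le _ _).trans (mul_le_of_le_one_left (norm_nonneg _) hp)
  have h4 := h3.add h1
  rw [zero_add] at h4
  refine h4.congr fun p => ?_
  rw [mul_sub, mul_assoc]; abel


end Stab


lemma Stabilization.rk_add_le (SB : Stabilization A W) (τ : QuasiTrace W) (x y : W) :
    rk τ (x + y) ≤ rk τ x + rk τ y := by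
  have hU := CStarAlgebra.increasingApproximateUnit A
  have hne : (CStarAlgebra.approximateUnit A).NeBot := hU.neBot
  refine rk_le_of_tendsto τ (SB.tendsto_conj (x + y)) fun p => ?_
  obtain ⟨n, u⟩ := p
  set Q := SB.diag n (u * u) with hQ
  set v := SB.diagS 0 n u with hv
  set w := SB.diagS n n u with hw
  set T := SB.diagS 0 n (star u) + SB.diagS n n (star u) with hT
  have hQ0 : SB.diagS 0 n (u * u) = Q := rfl
  have hvw : star v * w = 0 := SB.star_diagS_mul_ne n u u
  have h0 : star (SB.diagS n n (star u)) * v = 0 := by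
    have := congrArg star (SB.star_diagS_mul_ne n u (star u))
    rwa [star_mul, star_star, star_zero] at this
  have hTv : star T * v = Q := by
    rw [hT, star_add, add_mul, h0, hv, SB.star_diagS_mul_same, star_star, add_zero]
    exact hQ0
  have hTw : star T * w = Q := by
    rw [hT, star_add, add_mul, hw, SB.star_diagS_mul_same, star_star, SB.star_diagS_mul_ne,
      zero_add]
    exact hQ0
  clear_value T
  have hvT : star v * T = star Q := by rw [← hTv, star_mul, star_star]
  have hwT : star w * T = star Q := by rw [← hTw, star_mul, star_star]
  have e : Q * (x + y) * star Q = star T * (v * x * star v + w * y * star w) * T := by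
    have : star T * (v * x * star v + w * y * star w) * T =
        (star T * v) * x * (star v * T) + (star T * w) * y * (star w * T) := by
      rw [mul_add, add_mul]; simp only [mul_assoc]
    rw [this, hTv, hTw, hvT, hwT, mul_add, add_mul]
  have h1 : star (v * x * star v) * (w * y * star w) = 0 := by
    have : star (v * x * star v) * (w * y * star w) =
        v * star x * (star v * w) * y * star w := by
      simp only [star_mul, star_star, mul_assoc]
    rw [this, hvw]; simp
  have h2 : (v * x * star v) * star (w * y * star w) = 0 := by
    have : (v * x * star v) * star (w * y * star w) =
        v * x * (star v * w) * star y * star w := by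
      simp only [star_mul, star_star, mul_assoc]
    rw [this, hvw]; simp
  calc rk τ (Q * (x + y) * star Q) ≤ rk τ (v * x * star v + w * y * star w) := by
        rw [e]; exact (rk_mul_right_le _ _ _).trans (rk_mul_left_le _ _ _)
    _ ≤ rk τ (v * x * star v) + rk τ (w * y * star w) := rk_add_le_of_orthogonal τ h1 h2
    _ ≤ rk τ x + rk τ y := add_le_add
        ((rk_mul_right_le _ _ _).trans (rk_mul_left_le _ _ _))
        ((rk_mul_right_le _ _ _).trans (rk_mul_left_le _ _ _))

lemma Stabilization.isometry_cont (SB : Stabilization A W) (i j : ℕ) : Continuous (SB.emb i j) := by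
  refine AddMonoidHomClass.continuous_of_bound (SB.emb i j) 1 fun b => ?_
  rw [SB.norm_emb, one_mul]

/-- `a ⊗ e₀₀` as a star homomorphism. -/
lemma Stabilization.emb_zero_eq_diag (SB : Stabilization A W) (a : A) :
    SB.emb 0 0 a = SB.diag 1 a := by
  rw [SB.diag_apply]; simp

lemma Stabilization.diag_nonneg (SB : Stabilization A W) (n : ℕ) {a : A} (ha : 0 ≤ a) :
    0 ≤ SB.diag n a := by
  have hs : CFC.sqrt a * CFC.sqrt a = a := CFC.sqrt_mul_sqrt_self a ha
  have hst : star (CFC.sqrt a) = CFC.sqrt a :=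
    (IsSelfAdjoint.of_nonneg (CFC.sqrt_nonneg a)).star_eq
  have : SB.diag n a = star (SB.diag n (CFC.sqrt a)) * SB.diag n (CFC.sqrt a) := by
    rw [← map_star, ← map_mul, hst, hs]
  rw [this]
  exact star_mul_self_nonneg _

lemma Stabilization.diag_mem_pedersen (SB : Stabilization A W) (n : ℕ) {a : A} (ha : 0 ≤ a)
    {ε : ℝ} (hε : 0 < ε) : SB.diag n (fEps ε a) ∈ pedersen W := by
  have h1 : fEps ε a * fEps (ε / 2) a = fEps ε a := fEps_mul_fEps' (half_pos hε) le_rfl a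
  have h2 := fEps_eq_cutQ_mul (half_pos hε) ha
  refine mem_pedersen_of_factor (a := SB.diag n (cfcₙ (cutQ (ε / 2)) a)) (h := SB.diag n a) ?_
  rw [← map_mul, ← map_mul, ← h2, h1]

/-- If the trace of a full cut-down vanishes then the quasitrace is zero. -/
lemma Stabilization.isZero_of (SB : Stabilization A W) (hs : IsSimpleCStar A) (τ : QuasiTrace W)
    {a : A} {ε : ℝ} (hε : 0 < ε) (h0 : fEps ε a ≠ 0)
    (hτ : τ.toFun (SB.emb 0 0 (fEps (ε / 2) a)) = 0) : τ.IsZero := by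
  set k0 := fEps ε a with hk0
  set k1 := fEps (ε / 2) a with hk1
  have h10 : k1 * k0 = k0 := fEps_mul_fEps (half_pos hε) le_rfl a
  have h01 : k0 * k1 = k0 := fEps_mul_fEps' (half_pos hε) le_rfl a
  have hr0 : rk τ (SB.emb 0 0 k0) = 0 := by
    refine le_antisymm (iSup_le fun n => ?_) bot_le
    rw [← hτ]
    have hn : (0 : ℝ) < 1 / (n + 1) := by positivity
    refine τ.le_of_unit (fEps_nonneg _ _) (fEps_norm_le _ _) ?_ ?_ ?_
    · rw [SB.emb_zero_eq_diag]; exact SB.diag_nonneg _ (fEps_nonneg _ _)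
    · rw [SB.norm_emb]; exact fEps_norm_le _ _
    · have h := fEps_eq_cutQ_mul hn (star_mul_self_nonneg (SB.emb 0 0 k0))
      have hst := congrArg star h
      rw [fEps_star, star_mul] at hst
      rw [hst, ← mul_assoc]
      congr 1
      rw [star_mul, star_star, SB.emb_star, ← mul_assoc, SB.emb_mul, if_pos rfl]
      have : star k0 = k0 := fEps_star _ _
      rw [this, h10]
  let J : TwoSidedIdeal A := TwoSidedIdeal.mk' {b : A | ∀ i j, rk τ (SB.emb i j b) = 0}
    (by intro i j; rw [map_zero, rk_zero])
    (by
      intro b c hb hc i j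
      rw [map_add]
      exact le_antisymm ((SB.rk_add_le τ _ _).trans (by rw [hb, hc, add_zero])) bot_le)
    (by intro b hb i j; rw [map_neg, rk_neg, hb])
    (by
      intro b c hc i j
      have : SB.emb i j (b * c) = SB.emb i i b * SB.emb i j c := by
        rw [SB.emb_mul, if_pos rfl]
      rw [this]
      exact le_antisymm ((rk_mul_left_le τ _ _).trans (hc i j).le) bot_le)
    (by
      intro b c hb i j
      have : SB.emb i j (b * c) = SB.emb i j b * SB.emb j j c := by
        rw [SB.emb_mul, if_pos rfl]
      rw [this]
      exact le_antisymm ((rk_mul_right_le τ _ _).trans (hb i j).le) bot_le)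
  have hJ : (J : Set A) = {b : A | ∀ i j, rk τ (SB.emb i j b) = 0} := TwoSidedIdeal.coe_mk' _ _ _ _ _ _
  have hJc : IsClosed (J : Set A) := by
    refine isClosed_of_closure_subset fun b hb => ?_
    obtain ⟨u, hu, hub⟩ := mem_closure_iff_seq_limit.1 hb
    rw [hJ] at hu ⊢
    intro i j
    refine le_antisymm (rk_le_of_tendsto τ (((SB.isometry_cont i j).tendsto b).comp hub)
      fun n => ?_) bot_le
    exact (hu n i j).le
  have hk : k0 ∈ (J : Set A) := by
    rw [hJ]
    intro i j
    have : SB.emb i j k0 = SB.emb i 0 k1 * SB.emb 0 0 k0 * SB.emb 0 j k1 := by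
      rw [SB.emb_mul, if_pos rfl, SB.emb_mul, if_pos rfl, h10, h01]
    rw [this]
    exact le_antisymm (((rk_mul_right_le τ _ _).trans (rk_mul_left_le τ _ _)).trans hr0.le) bot_le
  have huniv : (J : Set A) = Set.univ := by
    rcases hs.2 J hJc with h | h
    · rw [h] at hk; exact absurd hk h0
    · exact h
  have hall : ∀ i j b, rk τ (SB.emb i j b) = 0 := by
    intro i j b
    have : b ∈ (J : Set A) := by rw [huniv]; trivial
    rw [hJ] at this
    exact this i j
  have hspan : ∀ y ∈ Submodule.span ℂ {w : W | ∃ (i j : ℕ) (a : A), w = SB.emb i j a},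
      ∀ c : ℂ, rk τ (c • y) = 0 := by
    intro y hy
    induction hy using Submodule.span_induction with
    | mem y hy =>
      obtain ⟨i, j, a, rfl⟩ := hy
      intro c
      rw [← map_smul, hall]
    | zero => intro c; rw [smul_zero, rk_zero]
    | add y z _ _ hy hz =>
      intro c
      rw [smul_add]
      exact le_antisymm ((SB.rk_add_le τ _ _).trans (by rw [hy, hz, add_zero])) bot_le
    | smul d y _ hy => intro c; rw [smul_smul, hy]
  have hz : ∀ y : W, rk τ y = 0 := by
    intro y
    obtain ⟨u, hu, hub⟩ := mem_closure_iff_seq_limit.1 (SB.dense_span y)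
    refine le_antisymm (rk_le_of_tendsto τ hub fun n => ?_) bot_le
    have := hspan _ (hu n) 1
    rw [one_smul] at this
    exact this.le
  intro F
  by_cases hF : 0 ≤ F
  · by_cases hF0 : F = 0
    · rw [hF0, τ.map_zero]
    · have hn : 0 < ‖F‖ := norm_pos_iff.2 hF0
      have hG : 0 ≤ ‖F‖⁻¹ • F := smul_nonneg (by positivity) hF
      have hGn : ‖‖F‖⁻¹ • F‖ ≤ 1 := by
        rw [norm_smul, norm_inv, norm_norm, inv_mul_cancel₀ hn.ne']
      have h1 := τ.le_rk_self hG hGn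
      rw [hz] at h1
      have h2 := τ.map_smul ‖F‖ _ hn hG
      rw [smul_smul, mul_inv_cancel₀ hn.ne', one_smul] at h2
      rw [h2, le_antisymm h1 bot_le, mul_zero]
  · exact τ.zero_of_not_nonneg F hF

lemma Stabilization.trace_emb_diag (SB : Stabilization A W) (τ : QuasiTrace W) {a : A}
    (ha : 0 ≤ a) (i : ℕ) : τ.toFun (SB.emb i i a) = τ.toFun (SB.emb 0 0 a) := by
  have hs : CFC.sqrt a * CFC.sqrt a = a := CFC.sqrt_mul_sqrt_self a ha
  have hst : star (CFC.sqrt a) = CFC.sqrt a :=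
    (IsSelfAdjoint.of_nonneg (CFC.sqrt_nonneg a)).star_eq
  have h := τ.map_star_mul_self (SB.emb i 0 (CFC.sqrt a))
  rw [SB.emb_star, SB.emb_mul, SB.emb_mul, if_pos rfl, if_pos rfl, hst, hs] at h
  exact h.symm

lemma Stabilization.emb_nonneg (SB : Stabilization A W) (i : ℕ) {a : A} (ha : 0 ≤ a) :
    0 ≤ SB.emb i i a := by
  have hs : CFC.sqrt a * CFC.sqrt a = a := CFC.sqrt_mul_sqrt_self a ha
  have hst : star (CFC.sqrt a) = CFC.sqrt a :=
    (IsSelfAdjoint.of_nonneg (CFC.sqrt_nonneg a)).star_eq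
  have : SB.emb i i a = star (SB.emb i i (CFC.sqrt a)) * SB.emb i i (CFC.sqrt a) := by
    rw [SB.emb_star, SB.emb_mul, if_pos rfl, hst, hs]
  rw [this]
  exact star_mul_self_nonneg _

lemma Stabilization.trace_diag (SB : Stabilization A W) (τ : QuasiTrace W) {a : A}
    (ha : 0 ≤ a) (n : ℕ) : τ.toFun (SB.diag n a) = n * τ.toFun (SB.emb 0 0 a) := by
  induction n with
  | zero => rw [SB.diag_apply]; simp [τ.map_zero]
  | succ n ih =>
    have e : SB.diag (n + 1) a = SB.diag n a + SB.emb n n a := by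
      rw [SB.diag_apply, SB.diag_apply, Finset.sum_range_succ]
    have z1 : SB.diag n a * SB.emb n n a = 0 := by
      rw [SB.diag_apply, Finset.sum_mul]
      refine Finset.sum_eq_zero fun i hi => ?_
      rw [SB.emb_mul, if_neg]
      have := Finset.mem_range.1 hi
      omega
    have z2 : SB.emb n n a * SB.diag n a = 0 := by
      rw [SB.diag_apply, Finset.mul_sum]
      refine Finset.sum_eq_zero fun i hi => ?_
      rw [SB.emb_mul, if_neg]
      have := Finset.mem_range.1 hi
      omega
    rw [e, τ.map_add_of_commute _ _ (SB.diag_nonneg n ha) (SB.emb_nonneg n ha)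
      (z1.trans z2.symm), ih, SB.trace_emb_diag τ ha n]
    push_cast
    rw [add_mul, one_mul]

lemma continuous_eval {c : W} (hc : c ∈ pedersen W) :
    Continuous fun τ : QuasiTrace W => τ.toFun c := by
  have h1 : Continuous fun τ : QuasiTrace W => (fun a : pedersen W => τ.toFun a) :=
    continuous_induced_dom
  exact (continuous_apply (⟨c, hc⟩ : pedersen W)).comp h1

/-- Existence of a pair `f r₀ = r₀`, `f` in the Pedersen ideal, with `r₀` of large rank. -/
lemma Stabilization.exists_large (SB : Stabilization A W) (hs : IsSimpleCStar A)
    (S : Set (QuasiTrace W)) (hS : IsCompact S) (hS0 : ∀ τ ∈ S, ¬ τ.IsZero)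
    (M : ℝ≥0∞) (hM : M < ∞) :
    ∃ f r : W, f ∈ pedersen W ∧ f * r = r ∧ ∀ τ ∈ S, M < rk τ r := by
  obtain ⟨b, hb⟩ := hs.1
  set a := star b * b with ha
  have ha0 : 0 ≤ a := star_mul_self_nonneg b
  have han : a ≠ 0 := by rw [ha]; exact CStarRing.star_mul_self_ne_zero_iff b |>.2 hb
  obtain ⟨ε, hε, hk0⟩ : ∃ ε : ℝ, 0 < ε ∧ fEps ε a ≠ 0 := by
    by_contra hcon
    push Not at hcon
    have h := tendsto_mul_fEps b
    have : (fun n : ℕ => b * fEps (1 / ((n : ℝ) + 1)) (star b * b)) = fun _ => 0 := by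
      funext n
      rw [← ha, hcon _ (by positivity), mul_zero]
    rw [this] at h
    exact hb (tendsto_nhds_unique h tendsto_const_nhds)
  have hε2 := half_pos hε
  have hε4 := half_pos hε2
  set c := SB.emb 0 0 (fEps (ε / 2) a) with hc
  have hcp : c ∈ pedersen W := by
    rw [hc, SB.emb_zero_eq_diag]; exact SB.diag_mem_pedersen 1 ha0 hε2
  have hpos : ∀ τ ∈ S, 0 < τ.toFun c := by
    intro τ hτ
    refine pos_iff_ne_zero.2 fun h => hS0 τ hτ (SB.isZero_of hs τ hε hk0 h)
  obtain ⟨m, hm0, hm⟩ : ∃ m : ℝ≥0∞, 0 < m ∧ ∀ τ ∈ S, m ≤ τ.toFun c := by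
    rcases S.eq_empty_or_nonempty with h | h
    · exact ⟨1, one_pos, by simp [h]⟩
    · obtain ⟨σ, hσ, hmin⟩ := hS.exists_isMinOn h (continuous_eval hcp).continuousOn
      exact ⟨σ.toFun c, hpos σ hσ, fun τ hτ => hmin hτ⟩
  obtain ⟨N, hN⟩ : ∃ N : ℕ, M < N * m := by
    rcases eq_or_ne m ∞ with h | h
    · exact ⟨1, by simpa [h] using hM⟩
    · obtain ⟨N, hN⟩ := ENNReal.exists_nat_gt (r := M / m) (ENNReal.div_lt_top hM.ne hm0.ne').ne
      refine ⟨N, ?_⟩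
      rwa [ENNReal.div_lt_iff (Or.inl hm0.ne') (Or.inl h)] at hN
  refine ⟨SB.diag N (fEps (ε / 2 / 2) a), SB.diag N (fEps (ε / 2) a),
    SB.diag_mem_pedersen N ha0 hε4, ?_, ?_⟩
  · rw [← map_mul, fEps_mul_fEps hε4 le_rfl]
  · intro τ hτ
    have h1 := τ.le_rk_self (SB.diag_nonneg N (fEps_nonneg (ε / 2) a))
      ((SB.norm_diag_le N _).trans (fEps_norm_le _ _))
    rw [SB.trace_diag τ (fEps_nonneg _ _)] at h1
    refine hN.trans_le (le_trans ?_ h1)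
    gcongr
    exact hm τ hτ


/-! ### The inductive step -/

lemma Stabilization.step (SB : Stabilization A W) {p g2 g1 g0 r : W}
    (s2 : star g2 = g2) (s1 : star g1 = g1) (s0 : star g0 = g0)
    (hp2 : p * g2 = g2) (h21 : g2 * g1 = g1) (h10 : g1 * g0 = g0) (n1 : ‖g1‖ ≤ 1)
    (hc : CuntzLE p (star r * r)) :
    ∃ r' y Y : W, (∀ e, e * r = 0 → e * r' = 0) ∧ (∀ e, e * r = r → e * r' = r') ∧
      (∀ e, e * r = 0 → e * y = 0) ∧ (∀ e, e * r = r → e * Y = Y) ∧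
      (∀ e, e * y = 0 → e * Y = 0) ∧ star y * r' = 0 ∧ g0 * star y * Y = g0 ∧
      ‖y‖ ≤ 2 ∧ ‖Y‖ ≤ 4 ∧ ∀ τ : QuasiTrace W, rk τ r ≤ rk τ r' + 2 * rk τ g2 := by
  obtain ⟨xs, hxs⟩ := hc
  obtain ⟨n, hn⟩ := (hxs.eventually (gt_mem_nhds (show (0 : ℝ) < 1 / 2 by norm_num))).exists
  set s := xs n
  set m := r * s with hm
  set d := star m * m - p with hd
  have hdn : ‖d‖ < 1 / 2 := by
    rw [← norm_neg]
    have e : -d = p - star s * (star r * r) * s := by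
      rw [hd, hm, star_mul]; simp only [mul_assoc]; abel
    rw [e]; exact hn
  obtain ⟨d', -, hd'⟩ := exists_quasi_inv d (hdn.trans (by norm_num))
  have hp1 : p * g1 = g1 := by rw [← h21, ← mul_assoc, hp2]
  have h01 : g0 * g1 = g0 := by
    have := congrArg star h10
    rwa [star_mul, s0, s1] at this
  have hmm : star m * m = d + p := by rw [hd]; abel
  clear_value d
  set L := star m + d' * star m with hL
  have hLm : L * m * g2 = g2 := by
    have e : L * m * g2 = (star m * m) * g2 + d' * ((star m * m) * g2) := by
      rw [hL]; simp only [add_mul, mul_assoc]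
    rw [e, hmm, add_mul, hp2, mul_add]
    have : (d + d' + d' * d) * g2 = 0 := by rw [hd', zero_mul]
    calc d * g2 + g2 + (d' * (d * g2) + d' * g2) = (d + d' + d' * d) * g2 + g2 := by
          simp only [add_mul, mul_assoc]; abel
      _ = g2 := by rw [this, zero_add]
  have hLs : star L = r * (s + s * star d') := by
    rw [hL, hm]; simp only [star_add, star_mul, star_star, mul_add, mul_assoc]
  clear_value L
  set c := m * g2 * L with hcdef
  set y := m * g1 with hy
  have hcy : c * y = y := by
    have : c * y = m * g2 * (L * m * (g2 * g1)) := by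
      rw [h21, hcdef, hy]; simp only [mul_assoc]
    rw [this, ← mul_assoc (L * m), hLm, h21, mul_assoc, h21]
  have hcs : star c = r * ((s + s * star d') * g2 * star m) := by
    rw [hcdef, star_mul, star_mul, s2, hLs]; simp only [mul_assoc]
  have hcr : c = r * (s * g2 * L) := by rw [hcdef, hm]; simp only [mul_assoc]
  have hyr : y = r * (s * g1) := by rw [hy, hm, mul_assoc]
  clear_value c y
  set C := c + star c - star c * c with hC
  have hCs : star C = C := by
    rw [hC]; simp only [star_sub, star_add, star_mul, star_star]; abel
  have hCy : C * y = y := by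
    rw [hC, sub_mul, add_mul, mul_assoc, hcy]; abel
  have hyC : star y * C = star y := by
    have := congrArg star hCy
    rwa [star_mul, hCs] at this
  have hCr : ∃ t, C * r = r * t := by
    refine ⟨s * g2 * L * r + (s + s * star d') * g2 * star m * (r - c * r), ?_⟩
    have : C * r = c * r + star c * (r - c * r) := by
      rw [hC]; simp only [sub_mul, add_mul, mul_sub, mul_assoc]; abel
    rw [this, hcs, mul_add]
    congr 1
    · conv_lhs => rw [hcr]
      simp only [mul_assoc]
    · simp only [mul_assoc]
  obtain ⟨t, ht⟩ := hCr
  set d1 := g1 * d * g1 with hd1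
  have hd1n : ‖d1‖ ≤ 1 / 2 := by
    calc ‖d1‖ ≤ ‖g1‖ * ‖d‖ * ‖g1‖ := norm_mul₃_le
      _ ≤ 1 * (1 / 2) * 1 := by gcongr
      _ = 1 / 2 := by norm_num
  obtain ⟨d1', hd1', -⟩ := exists_quasi_inv d1 (hd1n.trans_lt (by norm_num))
  have hd1'n : ‖d1'‖ ≤ 1 := by
    have e : d1' = -(d1 + d1 * d1') := by
      have : d1' + (d1 + d1 * d1') = 0 := by rw [← hd1']; abel
      exact eq_neg_of_add_eq_zero_left this
    have : ‖d1'‖ ≤ 1 / 2 + 1 / 2 * ‖d1'‖ := by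
      calc ‖d1'‖ = ‖d1 + d1 * d1'‖ := by conv_lhs => rw [e, norm_neg]
        _ ≤ ‖d1‖ + ‖d1‖ * ‖d1'‖ := (norm_add_le _ _).trans (by gcongr; exact norm_mul_le _ _)
        _ ≤ 1 / 2 + 1 / 2 * ‖d1'‖ := by gcongr
    linarith
  have hyy : star y * y = g1 * g1 + d1 := by
    have : star y * y = g1 * (star m * m) * g1 := by
      rw [hy, star_mul, s1]; simp only [mul_assoc]
    rw [this, hmm, mul_add, add_mul, mul_assoc g1 p, hp1, hd1]; abel
  have hyn : ‖y‖ ≤ 2 := by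
    have h1 : ‖y‖ * ‖y‖ ≤ 1 * 1 + 1 / 2 := by
      rw [← CStarRing.norm_star_mul_self, hyy]
      refine (norm_add_le _ _).trans ?_
      gcongr
      exact (norm_mul_le _ _).trans (by gcongr)
    nlinarith [norm_nonneg y]
  refine ⟨r - C * r, y, y + y * d1', ?_, ?_, ?_, ?_, ?_, ?_, ?_, hyn, ?_, ?_⟩
  · intro e he
    rw [ht, mul_sub, ← mul_assoc, he, zero_mul, sub_zero]
  · intro e he
    rw [ht, mul_sub, ← mul_assoc, he]
  · intro e he
    rw [hyr, ← mul_assoc, he, zero_mul]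
  · intro e he
    have : e * y = y := by rw [hyr, ← mul_assoc, he]
    rw [mul_add, ← mul_assoc, this]
  · intro e he
    rw [mul_add, ← mul_assoc, he, zero_mul, add_zero]
  · rw [mul_sub, ← mul_assoc, hyC, sub_self]
  · have h1 : g0 * star y * y = g0 + g0 * d1 := by
      rw [mul_assoc, hyy, mul_add, ← mul_assoc, h01, h01]
    have : g0 * star y * (y + y * d1') = g0 + g0 * (d1 + d1' + d1 * d1') := by
      rw [mul_add, ← mul_assoc, h1]; simp only [mul_add, add_mul, mul_assoc]; abel
    rw [this, hd1', mul_zero, add_zero]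
  · calc ‖y + y * d1'‖ ≤ ‖y‖ + ‖y‖ * ‖d1'‖ :=
          (norm_add_le _ _).trans (by gcongr; exact norm_mul_le _ _)
      _ ≤ 2 + 2 * 1 := by gcongr
      _ = 4 := by norm_num
  · intro τ
    have hrc : rk τ c ≤ rk τ g2 := hcdef ▸ (rk_mul_right_le τ _ _).trans (rk_mul_left_le τ _ _)
    have e1 : r = (r - C * r) + C * r := by abel
    have e2 : C * r = c * r + star c * (r - c * r) := by
      rw [hC]; simp only [sub_mul, add_mul, mul_sub, mul_assoc]; abel
    calc rk τ r = rk τ ((r - C * r) + C * r) := by rw [← e1]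
      _ ≤ rk τ (r - C * r) + rk τ (C * r) := SB.rk_add_le τ _ _
      _ ≤ rk τ (r - C * r) + 2 * rk τ g2 := by
          gcongr
          rw [e2, two_mul]
          refine (SB.rk_add_le τ _ _).trans (add_le_add ?_ ?_)
          · exact (rk_mul_right_le τ _ _).trans hrc
          · exact (rk_mul_right_le τ _ _).trans ((rk_star τ c).le.trans hrc)

/-! ### Bumps -/

lemma le_of_unit_mul {F q : R} (hF : 0 ≤ F) (hF1 : ‖F‖ ≤ 1)
    (hq : 0 ≤ q) (hq1 : ‖q‖ ≤ 1) (h : q * F = F) : F ≤ q := by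
  have hFs : star F = F := (IsSelfAdjoint.of_nonneg hF).star_eq
  have hqs : star q = q := (IsSelfAdjoint.of_nonneg hq).star_eq
  have h' : F * q = F := by
    have := congrArg star h
    rwa [star_mul, hFs, hqs] at this
  have h1 := CStarAlgebra.star_left_conjugate_le_norm_smul (a := q) (b := F)
    (IsSelfAdjoint.of_nonneg hF)
  rw [hqs, h, h'] at h1
  have hqq : 0 ≤ q * q := by
    have := star_mul_self_nonneg q
    rwa [hqs] at this
  have h2 : ‖F‖ • (q * q) ≤ q * q := by
    have : q * q - ‖F‖ • (q * q) = (1 - ‖F‖) • (q * q) := by rw [sub_smul, one_smul]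
    rw [← sub_nonneg, this]
    exact smul_nonneg (by linarith) hqq
  exact h1.trans (h2.trans (mul_self_le_of_norm_le_one hq hq1))

/-- The bump function `f_lo - f_hi`. -/
def bump (lo hi : ℝ) (a : R) : R := fEps lo a - fEps hi a

lemma bump_star (lo hi : ℝ) (a : R) : star (bump lo hi a) = bump lo hi a := by
  unfold bump; rw [star_sub, fEps_star, fEps_star]

lemma bump_nonneg {lo hi : ℝ} (h0 : 0 < lo) (h : lo ≤ hi / 2) (a : R) : 0 ≤ bump lo hi a :=
  sub_nonneg.2 (le_of_unit_mul (fEps_nonneg _ _) (fEps_norm_le _ _) (fEps_nonneg _ _)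
    (fEps_norm_le _ _) (fEps_mul_fEps h0 h a))

lemma bump_norm_le {lo hi : ℝ} (h0 : 0 < lo) (h : lo ≤ hi / 2) (a : R) : ‖bump lo hi a‖ ≤ 1 :=
  (CStarAlgebra.norm_le_norm_of_nonneg_of_le (bump_nonneg h0 h a)
    (sub_le_self _ (fEps_nonneg _ _))).trans (fEps_norm_le lo a)

lemma bump_mul_bump {lo hi lo' hi' : ℝ} (h0 : 0 < lo') (h1 : lo' ≤ lo / 2) (h : lo ≤ hi / 2)
    (h2 : hi ≤ hi' / 2) (a : R) : bump lo' hi' a * bump lo hi a = bump lo hi a := by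
  have hlo : 0 < lo := by linarith
  have hhi : 0 < hi := by linarith
  have hhi' : 0 < hi' := by linarith
  unfold bump
  rw [sub_mul, mul_sub, mul_sub, fEps_mul_fEps h0 h1, fEps_mul_fEps h0 (by linarith),
    fEps_mul_fEps' hlo (by linarith), fEps_mul_fEps' hhi h2]
  abel

lemma QuasiTrace.bump_add (τ : QuasiTrace R) {lo hi : ℝ} (h0 : 0 < lo) (h : lo ≤ hi / 2) (a : R) :
    τ.toFun (bump lo hi a) + τ.toFun (fEps hi a) = τ.toFun (fEps lo a) := by
  rw [← τ.map_add_of_commute _ _ (bump_nonneg h0 h a) (fEps_nonneg _ _)]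
  · unfold bump; rw [sub_add_cancel]
  · unfold bump; rw [sub_mul, mul_sub, fEps_mul_fEps h0 h, fEps_mul_fEps' h0 h]

lemma dTau_le_of_unit (τ : QuasiTrace R) {b q : R} (hb : 0 ≤ b) (hq : 0 ≤ q) (hq1 : ‖q‖ ≤ 1)
    (h : q * b = b) : dTau τ b ≤ τ.toFun q := by
  refine iSup_le fun n => ?_
  have hn : (0 : ℝ) < 1 / (n + 1) := by positivity
  refine τ.le_of_unit (fEps_nonneg _ _) (fEps_norm_le _ _) hq hq1 ?_
  have hst := congrArg star (fEps_eq_cutQ_mul hn hb)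
  rw [fEps_star, star_mul, (IsSelfAdjoint.of_nonneg hb).star_eq] at hst
  rw [hst, ← mul_assoc, h]

lemma rk_le_of_unit (τ : QuasiTrace R) {g q : R} (hg : star g = g) (hq : 0 ≤ q) (hq1 : ‖q‖ ≤ 1)
    (h : q * g = g) : rk τ g ≤ τ.toFun q := by
  refine dTau_le_of_unit τ (star_mul_self_nonneg g) hq hq1 ?_
  rw [hg, ← mul_assoc, h]

lemma exists_seq_of_step {α β : Type*} [Nonempty (α × β)] (P : ℕ → α → Prop) (Q : ℕ → α → α → β → Prop) (r0 : α)
    (h0 : P 0 r0) (h : ∀ k r, P k r → ∃ t : α × β, Q k r t.1 t.2 ∧ P (k + 1) t.1) :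
    ∃ (r : ℕ → α) (b : ℕ → β), ∀ k, Q k (r k) (r (k + 1)) (b k) := by
  choose! φ hφ using h
  let r : ℕ → α := fun k => Nat.rec r0 (fun k r => (φ k r).1) k
  have hP : ∀ k, P k (r k) := by
    intro k
    induction k with
    | zero => exact h0
    | succ k ih => exact (hφ k _ ih).2
  exact ⟨r, fun k => (φ k (r k)).2, fun k => (hφ k _ (hP k)).1⟩


/-! ### The construction -/

/-- The scale `ε_k = 1024^{-k}`. -/
def epsK (k : ℕ) : ℝ := (1 / 1024) ^ k

lemma epsK_pos (k : ℕ) : 0 < epsK k := by unfold epsK; positivity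

lemma epsK_succ (k : ℕ) : epsK (k + 1) = epsK k / 1024 := by
  unfold epsK; rw [pow_succ]; ring

/-- The bump at scale `k` with width parameter `c`. -/
def bumpK (c : ℝ) (k : ℕ) (a : R) : R := bump (epsK (k + 1) / c) (c * epsK k) a

lemma bumpK_cond {c : ℝ} (hc : 1 ≤ c) (k : ℕ) :
    0 < epsK (k + 1) / c ∧ epsK (k + 1) / c ≤ c * epsK k / 2 := by
  have h0 := epsK_pos k
  have hc0 : 0 < c := by linarith
  refine ⟨div_pos (epsK_pos _) hc0, ?_⟩
  rw [epsK_succ]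
  have h1 : epsK k / 1024 / c ≤ epsK k / 1024 := div_le_self (by positivity) hc
  nlinarith

lemma bumpK_star (c : ℝ) (k : ℕ) (a : R) : star (bumpK c k a) = bumpK c k a := bump_star _ _ _

lemma bumpK_nonneg {c : ℝ} (hc : 1 ≤ c) (k : ℕ) (a : R) : 0 ≤ bumpK c k a :=
  bump_nonneg (bumpK_cond hc k).1 (bumpK_cond hc k).2 a

lemma bumpK_norm_le {c : ℝ} (hc : 1 ≤ c) (k : ℕ) (a : R) : ‖bumpK c k a‖ ≤ 1 :=
  bump_norm_le (bumpK_cond hc k).1 (bumpK_cond hc k).2 a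

lemma bumpK_mul {c c' : ℝ} (hc : 1 ≤ c) (hc' : 2 * c ≤ c') (k : ℕ) (a : R) :
    bumpK c' k a * bumpK c k a = bumpK c k a := by
  have h1 := bumpK_cond hc k
  have h2 := bumpK_cond (show 1 ≤ c' by linarith) k
  have hp := epsK_pos k
  have hp' := epsK_pos (k + 1)
  refine bump_mul_bump h2.1 ?_ h1.2 ?_ a
  · rw [div_div]
    exact div_le_div_of_nonneg_left hp'.le (by linarith) (by linarith)
  · nlinarith

lemma QuasiTrace.bumpK_le (τ : QuasiTrace R) {c : ℝ} (hc : 1 ≤ c) (k : ℕ) (a : R) :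
    τ.toFun (bumpK c k a) ≤ dTau τ a := by
  have h := bumpK_cond hc k
  have := τ.bump_add h.1 h.2 a
  calc τ.toFun (bumpK c k a) ≤ _ := le_self_add
    _ = _ := this
    _ ≤ _ := τ.fEps_le_dTau h.1 a

lemma QuasiTrace.sum_bumpK_le (τ : QuasiTrace R) (n : ℕ) (a : R) :
    ∑ j ∈ Finset.range n, τ.toFun (bumpK 16 j a) ≤ 2 * dTau τ a := by
  have key : ∑ j ∈ Finset.range n, τ.toFun (bumpK 16 j a) ≤
      τ.toFun (fEps (16 * epsK n) a) + τ.toFun (fEps (16 * epsK (n + 1)) a) := by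
    induction n with
    | zero => simp
    | succ n ih =>
      rw [Finset.sum_range_succ]
      have h := bumpK_cond (show (1 : ℝ) ≤ 16 by norm_num) n
      have h1 := τ.bump_add h.1 h.2 a
      have h2 : τ.toFun (fEps (epsK (n + 1) / 16) a) ≤ τ.toFun (fEps (16 * epsK (n + 1 + 1)) a) := by
        have hp := epsK_pos (n + 1)
        have hp2 := epsK_pos (n + 1 + 1)
        refine τ.fEps_anti (by positivity) ?_ a
        rw [epsK_succ (n + 1)]
        linarith
      calc _ ≤ τ.toFun (fEps (16 * epsK n) a) + τ.toFun (fEps (16 * epsK (n + 1)) a)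
            + τ.toFun (bumpK 16 n a) := by gcongr
        _ = τ.toFun (fEps (16 * epsK (n + 1)) a) +
            (τ.toFun (bumpK 16 n a) + τ.toFun (fEps (16 * epsK n) a)) := by ring
        _ ≤ _ := by
            gcongr
            exact h1.le.trans h2
  refine key.trans ?_
  rw [two_mul]
  have hp := epsK_pos n
  have hp2 := epsK_pos (n + 1)
  exact add_le_add (τ.fEps_le_dTau (by positivity) a) (τ.fEps_le_dTau (by positivity) a)

lemma cuntzLE_of_cone (hsc : StrictComparison W) (S : Set (QuasiTrace W))
    (hScone : ∀ τ : QuasiTrace W, ∃ r : ℝ, 0 ≤ r ∧ ∃ σ ∈ S,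
      ∀ a : W, 0 ≤ a → τ.toFun a = ENNReal.ofReal r * σ.toFun a) {a b : W} (ha : 0 ≤ a)
    (hb : 0 ≤ b) (h : ∀ σ ∈ S, dTau σ a < dTau σ b) : CuntzLE a b := by
  refine hsc a b ha hb fun τ hτ => ?_
  obtain ⟨r, hr, σ, hσ, hτσ⟩ := hScone τ
  have hr0 : r ≠ 0 := by
    rintro rfl
    refine hτ fun c => ?_
    by_cases hc : 0 ≤ c
    · rw [hτσ c hc]; simp
    · exact τ.zero_of_not_nonneg c hc
  have hd : ∀ c : W, dTau τ c = ENNReal.ofReal r * dTau σ c := by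
    intro c
    unfold dTau
    rw [ENNReal.mul_iSup]
    exact iSup_congr fun n => hτσ _ (fEps_nonneg _ _)
  rw [hd, hd]
  have hr1 : ENNReal.ofReal r ≠ 0 := by
    rw [Ne, ENNReal.ofReal_eq_zero, not_le]
    exact lt_of_le_of_ne hr (Ne.symm hr0)
  exact (ENNReal.mul_lt_mul_iff_right hr1 ENNReal.ofReal_ne_top).2 (h σ hσ)

/-- The sequences produced by the recursion. -/
lemma Stabilization.exists_sequences (SB : Stabilization A W) (hsc : StrictComparison W)
    (S : Set (QuasiTrace W))
    (hScone : ∀ τ : QuasiTrace W, ∃ r : ℝ, 0 ≤ r ∧ ∃ σ ∈ S,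
      ∀ a : W, 0 ≤ a → τ.toFun a = ENNReal.ofReal r * σ.toFun a)
    (a : W) (M : ℝ≥0∞) (hM : ∀ σ ∈ S, dTau σ a ≤ M)
    (f r0 : W) (hf : f * r0 = r0) (hr0 : ∀ σ ∈ S, 5 * M < rk σ r0) :
    ∃ y Y : ℕ → W, (∀ k, f * Y k = Y k) ∧ (∀ j k, j ≠ k → star (y j) * Y k = 0) ∧
      (∀ k, bumpK 1 k a * star (y k) * Y k = bumpK 1 k a) ∧ (∀ k, ‖y k‖ ≤ 2) ∧
      (∀ k, ‖Y k‖ ≤ 4) := by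
  have hstep := exists_seq_of_step (α := W) (β := W × W)
    (fun k r => f * r = r ∧ ∀ σ ∈ S, rk σ r0 ≤ rk σ r +
      2 * ∑ j ∈ Finset.range k, σ.toFun (bumpK 16 j a))
    (fun k r r' b => (∀ e, e * r = 0 → e * r' = 0) ∧ f * b.2 = b.2 ∧
      (∀ e, e * r = 0 → e * b.1 = 0) ∧
      (∀ e, e * b.1 = 0 → e * b.2 = 0) ∧ star b.1 * r' = 0 ∧
      bumpK 1 k a * star b.1 * b.2 = bumpK 1 k a ∧ ‖b.1‖ ≤ 2 ∧ ‖b.2‖ ≤ 4) r0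
    ⟨hf, fun σ hσ => by simp⟩ (by
      rintro k r ⟨hfr, hr⟩
      have hcz : CuntzLE (bumpK 8 k a) (star r * r) := by
        refine cuntzLE_of_cone hsc S hScone (bumpK_nonneg (by norm_num) k a)
          (star_mul_self_nonneg r) fun σ hσ => ?_
        have h1 : dTau σ (bumpK 8 k a) ≤ M :=
          (dTau_le_of_unit σ (bumpK_nonneg (by norm_num) k a)
            (bumpK_nonneg (c := 16) (by norm_num) k a)
            (bumpK_norm_le (by norm_num) k a)
            (bumpK_mul (by norm_num) (by norm_num) k a)).trans
          ((σ.bumpK_le (by norm_num) k a).trans (hM σ hσ))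
        refine h1.trans_lt ?_
        by_contra hcon
        rw [not_lt] at hcon
        have h2 : rk σ r0 ≤ 5 * M := by
          calc rk σ r0 ≤ _ := hr σ hσ
            _ ≤ M + 2 * (2 * M) := by
                gcongr
                · exact hcon
                · exact (σ.sum_bumpK_le k a).trans (by gcongr; exact hM σ hσ)
            _ = 5 * M := by ring
        exact absurd (hr0 σ hσ) (not_lt.2 h2)
      obtain ⟨r', y, Y, h1, h2, h3, h4, h5, h6, h7, h8, h9, h10⟩ := SB.step
        (bumpK_star 4 k a) (bumpK_star 2 k a) (bumpK_star 1 k a)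
        (bumpK_mul (by norm_num) (by norm_num) k a)
        (bumpK_mul (by norm_num) (by norm_num) k a)
        (bumpK_mul (by norm_num) (by norm_num) k a)
        (bumpK_norm_le (by norm_num) k a) hcz
      refine ⟨(r', y, Y), ⟨h1, h4 f hfr, h3, h5, h6, h7, h8, h9⟩, h2 f hfr, fun σ hσ => ?_⟩
      have h11 : rk σ (bumpK 4 k a) ≤ σ.toFun (bumpK 16 k a) :=
        rk_le_of_unit σ (bumpK_star 4 k a) (bumpK_nonneg (by norm_num) k a)
          (bumpK_norm_le (by norm_num) k a) (bumpK_mul (by norm_num) (by norm_num) k a)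
      rw [Finset.sum_range_succ]
      calc rk σ r0 ≤ _ := hr σ hσ
        _ ≤ (rk σ r' + 2 * rk σ (bumpK 4 k a)) +
            2 * ∑ j ∈ Finset.range k, σ.toFun (bumpK 16 j a) := by
              gcongr; exact h10 σ
        _ ≤ (rk σ r' + 2 * σ.toFun (bumpK 16 k a)) +
            2 * ∑ j ∈ Finset.range k, σ.toFun (bumpK 16 j a) := by gcongr
        _ = _ := by ring)
  obtain ⟨r, b, hb⟩ := hstep
  have horth : ∀ j k, j < k → star (b j).1 * r k = 0 := by
    intro j k hjk
    induction k, hjk using Nat.le_induction with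
    | base => exact (hb j).2.2.2.2.1
    | succ k _ ih => exact (hb k).1 _ ih
  refine ⟨fun k => (b k).1, fun k => (b k).2, fun k => (hb k).2.1, ?_,
    fun k => (hb k).2.2.2.2.2.1, fun k => (hb k).2.2.2.2.2.2.1, fun k => (hb k).2.2.2.2.2.2.2⟩
  have hyy : ∀ j k, j < k → star (b j).1 * (b k).1 = 0 := fun j k hjk =>
    (hb k).2.2.1 _ (horth j k hjk)
  intro j k hjk
  refine (hb k).2.2.2.1 _ ?_
  rcases lt_or_gt_of_ne hjk with h | h
  · exact hyy j k h
  · have := congrArg star (hyy k j h)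
    rwa [star_mul, star_star, star_zero] at this

lemma norm_sub_mul_fEps_epsK (x : R) (k : ℕ) :
    ‖x - x * fEps (epsK k) (star x * x)‖ ≤ (1 / 32) ^ k := by
  have h := norm_sub_mul_fEps_sq_le (epsK_pos k) x
  refine (pow_le_pow_iff_left₀ (norm_nonneg _) (by positivity) two_ne_zero).1 ?_
  refine h.trans (le_of_eq ?_)
  unfold epsK
  rw [← pow_mul, mul_comm, pow_mul]
  norm_num

lemma mem_pedersen_of_sequences (x f : W) (hf : f ∈ pedersen W) (y Y : ℕ → W)
    (h1 : ∀ k, f * Y k = Y k) (h2 : ∀ j k, j ≠ k → star (y j) * Y k = 0)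
    (h3 : ∀ k, bumpK 1 k (star x * x) * star (y k) * Y k = bumpK 1 k (star x * x))
    (h4 : ∀ k, ‖y k‖ ≤ 2) (h5 : ∀ k, ‖Y k‖ ≤ 4) : x ∈ pedersen W := by
  set a := star x * x with ha
  have hg : ∀ k, x * bumpK 1 k a = x * fEps (epsK (k + 1)) a - x * fEps (epsK k) a := by
    intro k
    unfold bumpK bump
    rw [mul_sub, div_one, one_mul]
  have hgn : ∀ k, ‖x * bumpK 1 k a‖ ≤ 2 * (1 / 32) ^ k := by
    intro k
    have e : x * bumpK 1 k a = (x - x * fEps (epsK k) a) - (x - x * fEps (epsK (k + 1)) a) := by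
      rw [hg]; abel
    have n1 := norm_sub_mul_fEps_epsK x k
    have n2 := norm_sub_mul_fEps_epsK x (k + 1)
    have n3 : ((1 : ℝ) / 32) ^ (k + 1) ≤ (1 / 32) ^ k :=
      pow_le_pow_of_le_one (by norm_num) (by norm_num) (Nat.le_succ k)
    rw [e]
    refine (norm_sub_le _ _).trans ?_
    rw [← ha] at n1 n2
    linarith
  -- the element `Y`
  have hYs : Summable fun k => ((1 / 2 : ℝ) ^ k) • Y k := by
    refine Summable.of_norm_bounded (g := fun k => (1 / 2 : ℝ) ^ k * 4)
      ((summable_geometric_of_lt_one (by norm_num) (by norm_num)).mul_right 4) fun k => ?_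
    rw [norm_smul, Real.norm_of_nonneg (by positivity)]
    gcongr
    exact h5 k
  set T := ∑' k, ((1 / 2 : ℝ) ^ k) • Y k with hT
  have hfT : f * T = T := by
    rw [hT, ← hYs.tsum_mul_left]
    exact tsum_congr fun k => by rw [mul_smul_comm, h1]
  have hTp : T ∈ pedersen W := by
    rw [← hfT]; exact pedersen_mul_right hf T
  have hyT : ∀ k, star (y k) * T = ((1 / 2 : ℝ) ^ k) • (star (y k) * Y k) := by
    intro k
    rw [hT, ← hYs.tsum_mul_left, tsum_eq_single k, mul_smul_comm]
    intro j hj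
    rw [mul_smul_comm, h2 k j (Ne.symm hj), smul_zero]
  -- the element `Z`
  have hZs : Summable fun k => ((2 : ℝ) ^ k) • (x * bumpK 1 k a * star (y k)) := by
    refine Summable.of_norm_bounded (g := fun k => (1 / 16 : ℝ) ^ k * 4)
      ((summable_geometric_of_lt_one (by norm_num) (by norm_num)).mul_right 4) fun k => ?_
    rw [norm_smul, Real.norm_of_nonneg (by positivity)]
    calc (2 : ℝ) ^ k * ‖x * bumpK 1 k a * star (y k)‖
        ≤ 2 ^ k * ((2 * (1 / 32) ^ k) * 2) := by
          gcongr
          refine (norm_mul_le _ _).trans ?_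
          rw [norm_star]
          exact mul_le_mul (hgn k) (h4 k) (norm_nonneg _) (by positivity)
      _ = (1 / 16 : ℝ) ^ k * 4 := by
          have : (1 / 16 : ℝ) ^ k = 2 ^ k * (1 / 32) ^ k := by
            rw [← mul_pow]; norm_num
          rw [this]; ring
  set Z := ∑' k, ((2 : ℝ) ^ k) • (x * bumpK 1 k a * star (y k)) with hZ
  have hterm : ∀ k, ((2 : ℝ) ^ k) • (x * bumpK 1 k a * star (y k)) * T = x * bumpK 1 k a := by
    intro k
    rw [smul_mul_assoc, mul_assoc, hyT, mul_smul_comm, smul_smul, ← mul_pow]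
    have : x * bumpK 1 k a * (star (y k) * Y k) = x * bumpK 1 k a := by
      have := congrArg (x * ·) (h3 k)
      simpa only [mul_assoc] using this
    rw [this]; norm_num
  have hZT : HasSum (fun k => x * bumpK 1 k a) (Z * T) := by
    have := hZs.hasSum.mul_right T
    simpa only [hterm] using this
  have hpart : ∀ n, ∑ k ∈ Finset.range n, x * bumpK 1 k a =
      x * fEps (epsK n) a - x * fEps (epsK 0) a := by
    intro n
    simp only [hg]
    exact Finset.sum_range_sub (fun k => x * fEps (epsK k) a) n
  have hlim : Tendsto (fun n => x * fEps (epsK n) a) atTop (𝓝 x) := by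
    rw [tendsto_iff_norm_sub_tendsto_zero]
    refine squeeze_zero (fun _ => norm_nonneg _) (fun n => ?_)
      (tendsto_pow_atTop_nhds_zero_of_lt_one (r := (1 / 32 : ℝ)) (by norm_num) (by norm_num))
    rw [norm_sub_rev]
    exact norm_sub_mul_fEps_epsK x n
  have hlim2 := hlim.sub_const (x * fEps (epsK 0) a)
  have hlim3 := hZT.tendsto_sum_nat
  simp only [hpart] at hlim3
  have hfin := tendsto_nhds_unique hlim3 hlim2
  have hx : x = Z * T + x * fEps (epsK 0) a := by rw [hfin]; abel
  rw [hx]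
  exact pedersen_add (pedersen_mul_left hTp Z)
    (pedersen_mul_left (fEps_mem_pedersen (epsK_pos 0) (star_mul_self_nonneg x)) x)

end Helpers

/-- **Corollary.** Let `A` be a σ-unital simple C*-algebra with `QT̃(A) ≠ {0}`, strict
comparison and surjective `Γ`, and let `S ⊆ QT̃(A) \ {0}` be a compact subset with
`ℝ₊ · S = QT̃(A)`.  If `x ∈ A ⊗ K` satisfies `sup {d_τ(x*x) : τ ∈ S} < ∞`, then
`x ∈ Ped(A ⊗ K)`. -/
theorem mem_pedersen_of_bounded_dimension
    (SB : Stabilization A W)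
    (hσ : SigmaUnital A) (hsimple : IsSimpleCStar A)
    (hqt : ∃ τ : QuasiTrace W, ¬ τ.IsZero)
    (hsc : StrictComparison W) (hΓ : GammaSurjective W)
    (S : Set (QuasiTrace W)) (hScompact : IsCompact S)
    (hSnonzero : ∀ τ ∈ S, ¬ τ.IsZero)
    (hScone : ∀ τ : QuasiTrace W, ∃ r : ℝ, 0 ≤ r ∧ ∃ σ ∈ S,
      ∀ a : W, 0 ≤ a → τ.toFun a = ENNReal.ofReal r * σ.toFun a)
    (x : W) (hbd : (⨆ τ ∈ S, dTau τ (star x * x)) < ∞) :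
    x ∈ pedersen W := by
  obtain ⟨f, r0, hf, hfr, hr⟩ := SB.exists_large hsimple S hScompact hSnonzero
    (5 * ⨆ τ ∈ S, dTau τ (star x * x)) (ENNReal.mul_lt_top (by norm_num) hbd)
  obtain ⟨y, Y, h1, h2, h3, h4, h5⟩ := SB.exists_sequences hsc S hScone (star x * x)
    (⨆ τ ∈ S, dTau τ (star x * x))
    (fun σ hσ => le_iSup₂ (f := fun τ (_ : τ ∈ S) => dTau τ (star x * x)) σ hσ) f r0 hfr hr
  exact mem_pedersen_of_sequences x f hf y Y h1 h2 h3 h4 h5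
end Paper
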